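/- arXiv:1309.3014 — 6 statements merged into one kernel-verified Lean document; each statement's English description precedes it below -/
import Mathlib

section
/- For every δ ∈ (0,1) there exists a constant C > 0 (depending only on δ) such that for all n ≥ 1, all x ∈ F₂ⁿ and all f : F₂ⁿ → ℝ with f ≥ 0 pointwise: T_δ f(x) ≤ C√n · N_δ f(x), i.e., the spherical average is pointwise dominated by C√n times the Bernoulli noise average. -/
open Finset

/-- Radius of the sphere used by `T_δ`: `⌈δn⌉` if `δ < 1/2`, else `⌊δn⌋`. -/
noncomputable def sphereRadius (n : ℕ) (δ : ℝ) : ℕ :=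
  if δ < 1 / 2 then ⌈δ * n⌉₊ else ⌊δ * n⌋₊

/-- The spherical averaging operator `T_δ` (real-valued functions). -/
noncomputable def sphereAvgR (n : ℕ) (δ : ℝ) (f : (Fin n → ZMod 2) → ℝ) :
    (Fin n → ZMod 2) → ℝ := fun x =>
  ((n.choose (sphereRadius n δ) : ℝ))⁻¹ *
    ∑ y ∈ univ.filter (fun y : Fin n → ZMod 2 => hammingNorm y = sphereRadius n δ),
      f (x + y)

/-- The Bernoulli noise operator `N_δ`. -/
noncomputable def noiseAvgR (n : ℕ) (δ : ℝ) (f : (Fin n → ZMod 2) → ℝ) :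
    (Fin n → ZMod 2) → ℝ := fun x =>
  ∑ y : Fin n → ZMod 2, δ ^ hammingNorm y * (1 - δ) ^ (n - hammingNorm y) * f (x + y)

lemma fact_upper (m : ℕ) :
    (m.factorial : ℝ) ≤ Real.exp 1 * Real.sqrt (m + 1) * (m / Real.exp 1) ^ m := by
  rcases m with _ | m
  · have := Real.add_one_le_exp (1 : ℝ)
    simp
  · have h : Stirling.stirlingSeq (m + 1) ≤ Stirling.stirlingSeq 1 :=
      Stirling.stirlingSeq'_antitone (Nat.zero_le m)
    rw [Stirling.stirlingSeq_one, Stirling.stirlingSeq, div_le_iff₀ (by positivity)] at h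
    refine h.trans ?_
    have h2 : Real.sqrt (2 * ((m + 1 : ℕ) : ℝ)) = Real.sqrt 2 * Real.sqrt ((m + 1 : ℕ) : ℝ) :=
      Real.sqrt_mul (by norm_num) _
    rw [h2]
    have h3 : Real.exp 1 / Real.sqrt 2 * (Real.sqrt 2 * Real.sqrt ((m + 1 : ℕ) : ℝ) *
        (((m + 1 : ℕ) : ℝ) / Real.exp 1) ^ (m + 1)) =
        Real.exp 1 * Real.sqrt ((m + 1 : ℕ) : ℝ) * (((m + 1 : ℕ) : ℝ) / Real.exp 1) ^ (m + 1) := by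
      have : Real.sqrt 2 ≠ 0 := by positivity
      field_simp
    rw [h3]
    gcongr
    linarith

lemma pow_self_upper (m : ℕ) (a : ℝ) (ha : 0 < a) :
    ((m : ℝ) / Real.exp 1) ^ m ≤ a ^ m * Real.exp ((m : ℝ) ^ 2 / a - 2 * m) := by
  have h : (m : ℝ) / Real.exp 1 ≤ a * Real.exp (m / a - 2) := by
    have h1 := Real.add_one_le_exp ((m : ℝ) / a - 1)
    have h2 : Real.exp ((m : ℝ) / a - 2) * Real.exp 1 = Real.exp (m / a - 1) := by
      rw [← Real.exp_add]; congr 1; ring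
    rw [div_le_iff₀ (Real.exp_pos 1), mul_assoc, h2]
    have h3 : (m : ℝ) = a * (m / a - 1 + 1) := by field_simp; ring
    calc (m : ℝ) = a * (m / a - 1 + 1) := h3
      _ ≤ _ := by gcongr
  calc ((m : ℝ) / Real.exp 1) ^ m ≤ (a * Real.exp (m / a - 2)) ^ m := by gcongr
    _ = _ := by
      rw [mul_pow, ← Real.exp_nat_mul]; congr 2; ring

lemma radius_facts (n : ℕ) (hn : 1 ≤ n) (δ : ℝ) (h0 : 0 < δ) (h1 : δ < 1) :
    sphereRadius n δ ≤ n ∧ ((sphereRadius n δ : ℝ) - δ * n) ^ 2 ≤ 1 := by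
  have hn' : (1 : ℝ) ≤ n := by exact_mod_cast hn
  have hle : δ * n ≤ n := by nlinarith
  have hnn : 0 ≤ δ * n := by positivity
  unfold sphereRadius
  split_ifs
  · refine ⟨Nat.ceil_le.2 hle, ?_⟩
    have := Nat.le_ceil (δ * n)
    have := Nat.ceil_lt_add_one hnn
    nlinarith
  · refine ⟨Nat.floor_le_of_le hle, ?_⟩
    have := Nat.floor_le hnn
    have := Nat.lt_floor_add_one (δ * n)
    nlinarith

lemma fact_mul_bound (m k : ℕ) (hn : 1 ≤ m + k) (δ : ℝ) (h0 : 0 < δ) (h1 : δ < 1)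
    (ht : ((m : ℝ) - δ * (m + k : ℕ)) ^ 2 ≤ 1) :
    (m.factorial : ℝ) * k.factorial ≤
      2 * Real.exp 1 ^ 2 * Real.exp (1 / (δ * (1 - δ))) * Real.sqrt (m + k : ℕ) *
        (m + k).factorial * (δ ^ m * (1 - δ) ^ k) := by
  obtain ⟨n, hnn⟩ : ∃ n : ℕ, n = m + k := ⟨_, rfl⟩
  rw [← hnn] at hn ht ⊢
  have hk : (k : ℝ) = n - m := by rw [hnn]; push_cast; ring
  have hn' : (1 : ℝ) ≤ n := by exact_mod_cast hn
  have hd : 0 < 1 - δ := by linarith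
  have ha : 0 < (n : ℝ) * δ := by positivity
  have hb : 0 < (n : ℝ) * (1 - δ) := by positivity
  have e1 : ((m : ℝ) / Real.exp 1) ^ m * ((k : ℝ) / Real.exp 1) ^ k ≤
      ((n : ℝ) / Real.exp 1) ^ n * (δ ^ m * (1 - δ) ^ k) * Real.exp (1 / (δ * (1 - δ))) := by
    have q : (m : ℝ) ^ 2 / (n * δ) - 2 * m + ((k : ℝ) ^ 2 / (n * (1 - δ)) - 2 * k) ≤
        -n + 1 / (δ * (1 - δ)) := by
      have : (m : ℝ) ^ 2 / (n * δ) - 2 * m + ((k : ℝ) ^ 2 / (n * (1 - δ)) - 2 * k) =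
        -n + ((m : ℝ) - δ * n) ^ 2 / (n * (δ * (1 - δ))) := by
        rw [hk]; field_simp; ring
      rw [this]
      have hp := mul_pos h0 hd
      have hq : δ * (1 - δ) ≤ n * (δ * (1 - δ)) := le_mul_of_one_le_left hp.le hn'
      have := div_le_div₀ zero_le_one ht hp hq
      linarith
    calc _ ≤ (((n : ℝ) * δ) ^ m * Real.exp ((m : ℝ) ^ 2 / (n * δ) - 2 * m)) *
          (((n : ℝ) * (1 - δ)) ^ k * Real.exp ((k : ℝ) ^ 2 / (n * (1 - δ)) - 2 * k)) := by
          gcongr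
          · exact pow_self_upper m _ ha
          · exact pow_self_upper k _ hb
      _ = (n : ℝ) ^ n * (δ ^ m * (1 - δ) ^ k) *
          Real.exp ((m : ℝ) ^ 2 / (n * δ) - 2 * m + ((k : ℝ) ^ 2 / (n * (1 - δ)) - 2 * k)) := by
          rw [Real.exp_add, mul_pow, mul_pow]
          have : (n : ℝ) ^ n = (n : ℝ) ^ m * (n : ℝ) ^ k := by rw [← pow_add, ← hnn]
          rw [this]; ring
      _ ≤ (n : ℝ) ^ n * (δ ^ m * (1 - δ) ^ k) * Real.exp (-n + 1 / (δ * (1 - δ))) := by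
          gcongr
      _ = _ := by
          rw [Real.exp_add, div_pow, ← Real.exp_nat_mul, Real.exp_neg]
          simp only [mul_one]
          ring
  have e2 : Real.sqrt n * ((n : ℝ) / Real.exp 1) ^ n ≤ n.factorial := by
    refine le_trans ?_ (Stirling.le_factorial_stirling n)
    gcongr
    nlinarith [Real.pi_gt_three]
  have e3 : Real.sqrt (m + 1) * Real.sqrt (k + 1) ≤ 2 * (Real.sqrt n * Real.sqrt n) := by
    have hm0 : (0 : ℝ) ≤ m := by positivity
    have hk0 : (0 : ℝ) ≤ k := by positivity
    rw [Real.mul_self_sqrt (by positivity), ← Real.sqrt_mul (by positivity)]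
    apply Real.sqrt_le_iff.2
    constructor
    · positivity
    · nlinarith
  calc (m.factorial : ℝ) * k.factorial
      ≤ (Real.exp 1 * Real.sqrt (m + 1) * (m / Real.exp 1) ^ m) *
        (Real.exp 1 * Real.sqrt (k + 1) * (k / Real.exp 1) ^ k) := by
        gcongr
        · exact fact_upper m
        · exact fact_upper k
    _ = Real.exp 1 ^ 2 * (Real.sqrt (m + 1) * Real.sqrt (k + 1)) *
        (((m : ℝ) / Real.exp 1) ^ m * ((k : ℝ) / Real.exp 1) ^ k) := by ring
    _ ≤ Real.exp 1 ^ 2 * (2 * (Real.sqrt n * Real.sqrt n)) *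
        (((n : ℝ) / Real.exp 1) ^ n * (δ ^ m * (1 - δ) ^ k) * Real.exp (1 / (δ * (1 - δ)))) := by
        gcongr
    _ = 2 * Real.exp 1 ^ 2 * Real.exp (1 / (δ * (1 - δ))) * Real.sqrt n *
        (Real.sqrt n * ((n : ℝ) / Real.exp 1) ^ n) * (δ ^ m * (1 - δ) ^ k) := by ring
    _ ≤ _ := by gcongr

theorem spherical_pointwise_dominated_by_noise :
    ∀ δ : ℝ, 0 < δ → δ < 1 →
      ∃ C : ℝ, 0 < C ∧
        ∀ n : ℕ, 1 ≤ n → ∀ f : (Fin n → ZMod 2) → ℝ, (∀ y, 0 ≤ f y) →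
          ∀ x : Fin n → ZMod 2,
            sphereAvgR n δ f x ≤ C * Real.sqrt n * noiseAvgR n δ f x := by
  intro δ h0 h1
  have hd : 0 < 1 - δ := by linarith
  refine ⟨2 * Real.exp 1 ^ 2 * Real.exp (1 / (δ * (1 - δ))), by positivity, ?_⟩
  intro n hn f hf x
  obtain ⟨hm, ht⟩ := radius_facts n hn δ h0 h1
  unfold sphereAvgR noiseAvgR
  generalize sphereRadius n δ = m at hm ht ⊢
  set C := 2 * Real.exp 1 ^ 2 * Real.exp (1 / (δ * (1 - δ))) with hC
  have hC0 : 0 < C := by positivity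
  have key : ((n.choose m : ℝ))⁻¹ ≤ C * Real.sqrt n * (δ ^ m * (1 - δ) ^ (n - m)) := by
    have hmk : m + (n - m) = n := by omega
    have hb := fact_mul_bound m (n - m) (by omega) δ h0 h1 (by rw [hmk]; exact ht)
    rw [hmk, ← hC] at hb
    rw [Nat.cast_choose ℝ hm, inv_div, div_le_iff₀ (by positivity)]
    linarith
  calc _ ≤ (C * Real.sqrt n * (δ ^ m * (1 - δ) ^ (n - m))) *
        ∑ y ∈ univ.filter (fun y : Fin n → ZMod 2 => hammingNorm y = m), f (x + y) := by
        gcongr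
        exact Finset.sum_nonneg fun y _ => hf _
    _ = C * Real.sqrt n * ∑ y ∈ univ.filter (fun y : Fin n → ZMod 2 => hammingNorm y = m),
          δ ^ hammingNorm y * (1 - δ) ^ (n - hammingNorm y) * f (x + y) := by
        rw [mul_assoc, Finset.mul_sum]
        congr 1
        refine Finset.sum_congr rfl fun y hy => ?_
        rw [(Finset.mem_filter.1 hy).2]
    _ ≤ _ := by
        gcongr
        · intro y _ _
          have := hf (x + y)
          positivity
        · exact Finset.subset_univ _
end

section
/- For every ε ∈ (0, 1/2] there exist constants C₁, C₂ > 0 such that for every n ≥ 1, every integer j with εn ≤ j ≤ (1−ε)n, every λ > 0, and every nonzero φ : F₂ⁿ → ℝ with φ ≥ 0: if (φ*φ, 1_{S_j}) / |S_j| ≥ λ‖φ‖₂², then ‖φ‖₂² / ‖φ‖₁² ≤ (1/C₁) · λ^{−C₂}. -/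
open Finset

/-- Normalized `L_p` norm on the Hamming cube (real-valued functions). -/
noncomputable def pnormR (n : ℕ) (p : ℝ) (f : (Fin n → ZMod 2) → ℝ) : ℝ :=
  ((2 : ℝ) ^ (-(n : ℝ)) * ∑ x : Fin n → ZMod 2, |f x| ^ p) ^ (1 / p)

/-- Normalized inner product `(f,g) = 2^{-n} Σ_x f(x) g(x)`. -/
noncomputable def innerP (n : ℕ) (f g : (Fin n → ZMod 2) → ℝ) : ℝ :=
  ((2 : ℝ) ^ n)⁻¹ * ∑ x : Fin n → ZMod 2, f x * g x

/-- Convolution `(f*g)(x) = Σ_y f(x+y) g(y)`. -/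
def conv (n : ℕ) (f g : (Fin n → ZMod 2) → ℝ) : (Fin n → ZMod 2) → ℝ :=
  fun x => ∑ y : Fin n → ZMod 2, f (x + y) * g y

/-- Indicator function of the Hamming sphere `S_j`. -/
def sphereInd (n j : ℕ) : (Fin n → ZMod 2) → ℝ :=
  fun x => if hammingNorm x = j then 1 else 0

/-- sign character on `ZMod 2`. -/
noncomputable def sg (a : ZMod 2) : ℝ := if a = 0 then 1 else -1

lemma zmod2_cases (a : ZMod 2) : a = 0 ∨ a = 1 := by
  revert a; decide

lemma sg_zero : sg 0 = 1 := by simp [sg]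
lemma sg_one : sg 1 = -1 := by simp [sg]

lemma sg_add (a b : ZMod 2) : sg (a + b) = sg a * sg b := by
  have h : (1 + 1 : ZMod 2) = 0 := by decide
  rcases zmod2_cases a with rfl | rfl <;> rcases zmod2_cases b with rfl | rfl <;>
    simp [sg_zero, sg_one, h]

lemma sg_mul_self (a : ZMod 2) : sg a * sg a = 1 := by
  rcases zmod2_cases a with rfl | rfl <;> simp [sg_zero, sg_one]

/-- Walsh characters. -/
noncomputable def chi {n : ℕ} (S : Finset (Fin n)) (x : Fin n → ZMod 2) : ℝ := ∏ i ∈ S, sg (x i)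

lemma chi_add {n : ℕ} (S : Finset (Fin n)) (x y : Fin n → ZMod 2) :
    chi S (x + y) = chi S x * chi S y := by
  simp [chi, sg_add, Finset.prod_mul_distrib]

lemma chi_insert {n : ℕ} {i : Fin n} {S : Finset (Fin n)} (h : i ∉ S) (x : Fin n → ZMod 2) :
    chi (insert i S) x = sg (x i) * chi S x := by
  simp [chi, Finset.prod_insert h]

lemma chi_single_of_notMem {n : ℕ} {i : Fin n} {S : Finset (Fin n)} (h : i ∉ S) :
    chi S (Pi.single i 1) = 1 := by
  unfold chi
  apply Finset.prod_eq_one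
  intro k hk
  have : k ≠ i := fun e => h (e ▸ hk)
  simp [Pi.single_eq_of_ne this, sg_zero]

lemma chi_compl {n : ℕ} (S : Finset (Fin n)) (x : Fin n → ZMod 2) :
    chi univ x * chi S x = chi Sᶜ x := by
  have h : chi univ x = chi S x * chi Sᶜ x := by
    unfold chi; rw [Finset.prod_mul_prod_compl]
  have h2 : chi S x * chi S x = 1 := by
    unfold chi; rw [← Finset.prod_mul_distrib]; simp [sg_mul_self]
  rw [h]; linear_combination (chi Sᶜ x) * h2

lemma chi_univ_abs {n : ℕ} (x : Fin n → ZMod 2) : |chi univ x| = 1 := by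
  have h2 : chi univ x * chi univ x = 1 := by
    unfold chi; rw [← Finset.prod_mul_distrib]; simp [sg_mul_self]
  have h3 : |chi univ x| * |chi univ x| = 1 := by rw [abs_mul_abs_self, h2]
  nlinarith [abs_nonneg (chi univ x)]

lemma chi_univ_eq {n : ℕ} (x : Fin n → ZMod 2) : chi univ x = (-1) ^ hammingNorm x := by
  unfold chi hammingNorm sg
  rw [Finset.prod_ite]
  simp

lemma sum_chi_chi {n : ℕ} (x y : Fin n → ZMod 2) :
    ∑ S : Finset (Fin n), chi S x * chi S y = if x = y then (2 : ℝ) ^ n else 0 := by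
  have h1 : ∑ S : Finset (Fin n), chi S x * chi S y = ∏ i, (1 + sg (x i) * sg (y i)) := by
    rw [Finset.prod_one_add]
    rw [Finset.powerset_univ]
    apply Finset.sum_congr rfl
    intro S _
    simp [chi, Finset.prod_mul_distrib]
  rw [h1]
  split_ifs with h
  · subst h
    simp only [sg_mul_self]
    norm_num
  · obtain ⟨i, hi⟩ := Function.ne_iff.mp h
    apply Finset.prod_eq_zero (Finset.mem_univ i)
    rcases zmod2_cases (x i) with h1 | h1 <;> rcases zmod2_cases (y i) with h2 | h2 <;>
      simp_all [sg_zero, sg_one]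

/-- Fourier coefficient. -/
noncomputable def fh {n : ℕ} (f : (Fin n → ZMod 2) → ℝ) (S : Finset (Fin n)) : ℝ :=
  ((2 : ℝ) ^ n)⁻¹ * ∑ x, f x * chi S x

lemma fh_inv {n : ℕ} (f : (Fin n → ZMod 2) → ℝ) (x : Fin n → ZMod 2) :
    f x = ∑ S, fh f S * chi S x := by
  unfold fh
  simp_rw [mul_assoc, Finset.sum_mul]
  rw [← Finset.mul_sum, Finset.sum_comm]
  simp_rw [mul_assoc, ← Finset.mul_sum, sum_chi_chi]
  simp
  field_simp

lemma pairing {n : ℕ} (f : (Fin n → ZMod 2) → ℝ) (c : Finset (Fin n) → ℝ) :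
    ((2 : ℝ) ^ n)⁻¹ * ∑ x, f x * (∑ S, c S * chi S x) = ∑ S, c S * fh f S := by
  unfold fh
  simp_rw [Finset.mul_sum]
  rw [Finset.sum_comm]
  apply Finset.sum_congr rfl; intro S _
  apply Finset.sum_congr rfl; intro x _
  ring

lemma parseval {n : ℕ} (f : (Fin n → ZMod 2) → ℝ) :
    ((2 : ℝ) ^ n)⁻¹ * ∑ x, f x ^ 2 = ∑ S, fh f S ^ 2 := by
  have := pairing f (fh f)
  simp_rw [← fh_inv] at this
  simpa [sq] using this

lemma fh_twist {n : ℕ} (f : (Fin n → ZMod 2) → ℝ) (S : Finset (Fin n)) :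
    fh (fun x => f x * chi univ x) S = fh f Sᶜ := by
  unfold fh
  simp_rw [mul_assoc, chi_compl]

lemma bonami {n : ℕ} (U : Finset (Fin n)) : ∀ c : Finset (Fin n) → ℝ,
    ((2 : ℝ) ^ n)⁻¹ * ∑ x, (∑ S ∈ U.powerset, c S * chi S x) ^ 4
      ≤ (∑ S ∈ U.powerset, 3 ^ S.card * c S ^ 2) ^ 2 := by
  induction U using Finset.induction_on with
  | empty => intro c; simp [chi]; exact le_of_eq (by ring)
  | insert i U hi ih =>
    intro c
    set a : (Fin n → ZMod 2) → ℝ := fun x => ∑ S ∈ U.powerset, c S * chi S x with ha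
    set b : (Fin n → ZMod 2) → ℝ := fun x => ∑ S ∈ U.powerset, c (insert i S) * chi S x with hb
    have hnot : ∀ S ∈ U.powerset, i ∉ S := fun S hS h => hi (Finset.mem_powerset.mp hS h)
    have hp : ∀ x, ∑ S ∈ (insert i U).powerset, c S * chi S x = a x + sg (x i) * b x := by
      intro x
      rw [Finset.sum_powerset_insert hi]
      simp only [ha, hb, Finset.mul_sum]
      congr 1
      apply Finset.sum_congr rfl
      intro S hS
      rw [chi_insert (hnot S hS)]; ring
    have hq : ∑ S ∈ (insert i U).powerset, (3 : ℝ) ^ S.card * c S ^ 2 =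
        (∑ S ∈ U.powerset, (3 : ℝ) ^ S.card * c S ^ 2) +
          3 * ∑ S ∈ U.powerset, (3 : ℝ) ^ S.card * c (insert i S) ^ 2 := by
      rw [Finset.sum_powerset_insert hi]
      congr 1
      rw [Finset.mul_sum]
      apply Finset.sum_congr rfl
      intro S hS
      rw [Finset.card_insert_of_notMem (hnot S hS)]; ring
    have hA := ih c
    have hB := ih (fun S => c (insert i S))
    set A := ∑ S ∈ U.powerset, (3 : ℝ) ^ S.card * c S ^ 2 with hAdef
    set B := ∑ S ∈ U.powerset, (3 : ℝ) ^ S.card * c (insert i S) ^ 2 with hBdef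
    have hA0 : 0 ≤ A := Finset.sum_nonneg fun S _ => by positivity
    have hB0 : 0 ≤ B := Finset.sum_nonneg fun S _ => by positivity
    rw [hq]
    simp_rw [hp]
    have hflipa : ∀ x, a (x + Pi.single i 1) = a x := by
      intro x
      simp only [ha]
      apply Finset.sum_congr rfl
      intro S hS
      rw [chi_add, chi_single_of_notMem (hnot S hS), mul_one]
    have hflipb : ∀ x, b (x + Pi.single i 1) = b x := by
      intro x
      simp only [hb]
      apply Finset.sum_congr rfl
      intro S hS
      rw [chi_add, chi_single_of_notMem (hnot S hS), mul_one]
    have h1 : ∑ x, (a x + sg (x i) * b x) ^ 4 = ∑ x, (a x - sg (x i) * b x) ^ 4 := by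
      rw [← Equiv.sum_comp (Equiv.addRight (Pi.single i (1 : ZMod 2)))]
      apply Finset.sum_congr rfl
      intro x _
      simp only [Equiv.coe_addRight, hflipa, hflipb, Pi.add_apply, Pi.single_eq_same, sg_add,
        sg_one]
      ring
    have h2 : ∑ x, (a x + sg (x i) * b x) ^ 4 =
        ∑ x, a x ^ 4 + 6 * ∑ x, a x ^ 2 * b x ^ 2 + ∑ x, b x ^ 4 := by
      have : 2 * ∑ x, (a x + sg (x i) * b x) ^ 4 =
        2 * (∑ x, a x ^ 4 + 6 * ∑ x, a x ^ 2 * b x ^ 2 + ∑ x, b x ^ 4) := by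
        rw [two_mul]
        nth_rewrite 2 [h1]
        rw [← Finset.sum_add_distrib, Finset.mul_sum, ← Finset.sum_add_distrib,
          ← Finset.sum_add_distrib, Finset.mul_sum]
        apply Finset.sum_congr rfl
        intro x _
        have h := sg_mul_self (x i)
        have h' : sg (x i) ^ 2 = 1 := by rw [sq, h]
        have h'' : sg (x i) ^ 4 = 1 := by
          rw [show 4 = 2 * 2 from rfl, pow_mul, h']; norm_num
        linear_combination (12 * a x ^ 2 * b x ^ 2) * h' + (2 * b x ^ 4) * h''
      linarith
    rw [h2]
    set w := ((2 : ℝ) ^ n)⁻¹ with hw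
    have hw0 : 0 ≤ w := by positivity
    set P := ∑ x, a x ^ 4
    set R := ∑ x, b x ^ 4
    set M := ∑ x, a x ^ 2 * b x ^ 2 with hM
    have hM0 : 0 ≤ M := Finset.sum_nonneg fun S _ => by positivity
    have hP0 : 0 ≤ P := Finset.sum_nonneg fun S _ => by positivity
    have hR0 : 0 ≤ R := Finset.sum_nonneg fun S _ => by positivity
    have hcs : M ^ 2 ≤ P * R := by
      have := Finset.sum_mul_sq_le_sq_mul_sq univ (fun x => a x ^ 2) (fun x => b x ^ 2)
      simp only [← pow_mul] at this
      exact this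
    have hM2 : w * M ≤ A * B := by
      apply le_of_sq_le_sq' (by positivity)
      calc (w * M) ^ 2 = w ^ 2 * M ^ 2 := by ring
        _ ≤ w ^ 2 * (P * R) := by gcongr
        _ = (w * P) * (w * R) := by ring
        _ ≤ A ^ 2 * B ^ 2 := mul_le_mul hA hB (by positivity) (by positivity)
        _ = (A * B) ^ 2 := by ring
    nlinarith [mul_nonneg hA0 hB0, sq_nonneg B]
where le_of_sq_le_sq' {u v : ℝ} (hv : 0 ≤ v) (h : u ^ 2 ≤ v ^ 2) : u ≤ v :=
  (abs_le_of_sq_le_sq' h hv).2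

/-- Consequence of hypercontractivity. -/
lemma hyper {n : ℕ} (f : (Fin n → ZMod 2) → ℝ) :
    (∑ S, (1 / 3 : ℝ) ^ S.card * fh f S ^ 2) ^ 2 ≤
      (((2 : ℝ) ^ n)⁻¹ * ∑ x, |f x|) ^ 2 * (((2 : ℝ) ^ n)⁻¹ * ∑ x, f x ^ 2) := by
  set Q := ∑ S, (1 / 3 : ℝ) ^ S.card * fh f S ^ 2 with hQ
  have hQ0 : 0 ≤ Q := Finset.sum_nonneg fun S _ => by positivity
  set c : Finset (Fin n) → ℝ := fun S => (1 / 3 : ℝ) ^ S.card * fh f S with hc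
  set g : (Fin n → ZMod 2) → ℝ := fun x => ∑ S, c S * chi S x with hg
  set w := ((2 : ℝ) ^ n)⁻¹ with hw
  have hw0 : 0 ≤ w := by positivity
  have h1 : w * ∑ x, f x * g x = Q := by
    rw [hw, hg, pairing, hQ]
    apply Finset.sum_congr rfl
    intro S _
    simp only [hc]; ring
  have h2 : w * ∑ x, g x ^ 4 ≤ Q ^ 2 := by
    have := bonami (univ : Finset (Fin n)) c
    rw [Finset.powerset_univ] at this
    refine this.trans (le_of_eq ?_)
    congr 1
    apply Finset.sum_congr rfl
    intro S _
    simp only [hc]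
    have h3 : (3 : ℝ) ^ S.card * (1 / 3) ^ S.card = 1 := by
      rw [← mul_pow]; norm_num
    linear_combination (1 / 3) ^ S.card * fh f S ^ 2 * h3
  set L := ∑ x, |f x|
  set F := ∑ x, f x ^ 2
  set G := ∑ x, g x ^ 4
  set H := ∑ x, |f x| * g x ^ 2
  have hL0 : 0 ≤ L := Finset.sum_nonneg fun S _ => by positivity
  have hF0 : 0 ≤ F := Finset.sum_nonneg fun S _ => by positivity
  have hH0 : 0 ≤ H := Finset.sum_nonneg fun S _ => by positivity
  have h3 : (∑ x, f x * g x) ^ 2 ≤ L * H := by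
    have h5 : |∑ x, f x * g x| ≤ ∑ x, √|f x| * (√|f x| * |g x|) := by
      refine (Finset.abs_sum_le_sum_abs _ _).trans (le_of_eq ?_)
      apply Finset.sum_congr rfl
      intro x _
      rw [abs_mul, ← mul_assoc, Real.mul_self_sqrt (abs_nonneg _)]
    have h6 := Finset.sum_mul_sq_le_sq_mul_sq univ (fun x => √|f x|) (fun x => √|f x| * |g x|)
    simp only [mul_pow, Real.sq_sqrt (abs_nonneg _), sq_abs] at h6
    rw [← sq_abs]
    exact (pow_le_pow_left₀ (abs_nonneg _) h5 2).trans h6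
  have h4 : H ^ 2 ≤ F * G := by
    have h6 := Finset.sum_mul_sq_le_sq_mul_sq univ (fun x => |f x|) (fun x => g x ^ 2)
    simp only [← pow_mul, sq_abs] at h6
    exact h6
  rcases hQ0.eq_or_lt with h0 | h0
  · rw [← h0]
    have : 0 ≤ (w * L) ^ 2 * (w * F) := by positivity
    simpa using this
  have h7 : Q ^ 2 ≤ (w * L) * (w * H) := by
    rw [← h1]; nlinarith [mul_le_mul_of_nonneg_left h3 (mul_nonneg hw0 hw0)]
  have h8 : (w * H) ^ 2 ≤ (w * F) * Q ^ 2 := by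
    calc (w * H) ^ 2 = w ^ 2 * H ^ 2 := by ring
      _ ≤ w ^ 2 * (F * G) := by gcongr
      _ = (w * F) * (w * G) := by ring
      _ ≤ _ := by gcongr
  have h9 : Q ^ 2 * Q ^ 2 ≤ ((w * L) ^ 2 * (w * F)) * Q ^ 2 := by
    calc Q ^ 2 * Q ^ 2 = (Q ^ 2) ^ 2 := by ring
      _ ≤ ((w * L) * (w * H)) ^ 2 := by gcongr
      _ = (w * L) ^ 2 * (w * H) ^ 2 := by ring
      _ ≤ (w * L) ^ 2 * ((w * F) * Q ^ 2) := by gcongr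
      _ = _ := by ring
  exact le_of_mul_le_mul_right h9 (by positivity)

open Polynomial in
/-- coefficientwise domination. -/
def Dom (p q : ℝ[X]) : Prop := ∀ k, |p.coeff k| ≤ q.coeff k

section
open Polynomial

lemma Dom.mul {p q p' q' : ℝ[X]} (h : Dom p q) (h' : Dom p' q') : Dom (p * p') (q * q') := by
  intro k
  rw [coeff_mul, coeff_mul]
  refine (Finset.abs_sum_le_sum_abs _ _).trans (Finset.sum_le_sum fun i _ => ?_)
  rw [abs_mul]
  exact mul_le_mul (h _) (h' _) (abs_nonneg _) ((abs_nonneg _).trans (h _))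

lemma Dom.one : Dom 1 1 := by
  intro k; simp only [coeff_one]; split_ifs <;> simp

lemma Dom.pow {p q : ℝ[X]} (h : Dom p q) (m : ℕ) : Dom (p ^ m) (q ^ m) := by
  induction m with
  | zero => simpa using Dom.one
  | succ m ih => rw [pow_succ, pow_succ]; exact ih.mul h

lemma dom_X (m : ℕ) : Dom (1 - X ^ m) (1 + X ^ m) := by
  intro k
  simp only [coeff_sub, coeff_add, coeff_one, coeff_X_pow]
  split_ifs <;> norm_num

lemma dom_self (m : ℕ) : Dom (1 + X ^ m) (1 + X ^ m) := by
  intro k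
  simp only [coeff_add, coeff_one, coeff_X_pow]
  split_ifs <;> norm_num

lemma choose_step (N j : ℕ) (α M : ℝ) (hα : 0 ≤ α) (hM : 0 < M) (hN : ((N + 2 : ℕ) : ℝ) ≤ M)
    (h1 : α ≤ (j + 2 : ℕ)) (h2 : α ≤ (N : ℝ) - j) (hj : j ≤ N) :
    ((N.choose (j + 2) : ℝ) + N.choose j) ≤
      (1 - 2 * α ^ 2 / M ^ 2) * ((N + 2).choose (j + 2) : ℝ) := by
  have e1 : ((N + 2).choose (j + 2) : ℝ) =
      N.choose j + 2 * N.choose (j + 1) + N.choose (j + 2) := by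
    have : (N + 2).choose (j + 2) = N.choose j + 2 * N.choose (j + 1) + N.choose (j + 2) := by
      rw [Nat.choose_succ_succ' (N+1) (j+1), Nat.choose_succ_succ' N j,
        Nat.choose_succ_succ' N (j+1)]
      ring
    exact_mod_cast this
  -- C(N,j+1) (N+2)(N+1) = C(N+2,j+2) (j+2) (N-j)
  have e2 : ((N + 2).choose (j + 2) : ℝ) * (j + 2) = (N + 2) * (N + 1).choose (j + 1) := by
    have := Nat.add_one_mul_choose_eq (N + 1) (j + 1)
    have h : (((N + 1 + 1) * (N + 1).choose (j + 1) : ℕ) : ℝ) =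
      (((N + 1 + 1).choose (j + 1 + 1) * (j + 1 + 1) : ℕ) : ℝ) := by rw [this]
    push_cast at h
    linarith
  have e3 : ((N + 1).choose (j + 1) : ℝ) * (N - j) = (N + 1) * N.choose (j + 1) := by
    have := Nat.choose_mul_succ_eq N (j + 1)
    have h : ((N.choose (j + 1) * (N + 1) : ℕ) : ℝ) =
      (((N + 1).choose (j + 1) * (N + 1 - (j + 1)) : ℕ) : ℝ) := by rw [this]
    rw [Nat.add_sub_add_right] at h
    push_cast [Nat.cast_sub hj] at h
    linarith
  have e4 : (N.choose (j + 1) : ℝ) * ((N + 2) * (N + 1)) =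
      ((N + 2).choose (j + 2) : ℝ) * ((j + 2) * (N - j)) := by
    linear_combination (-(N : ℝ) + j) * e2 - (N + 2 : ℝ) * e3
  set c := ((N + 2).choose (j + 2) : ℝ)
  set d := (N.choose (j + 1) : ℝ)
  have hc0 : 0 ≤ c := Nat.cast_nonneg _
  have hd0 : 0 ≤ d := Nat.cast_nonneg _
  push_cast at h1 hN
  have hN0 : (0 : ℝ) ≤ N := Nat.cast_nonneg _
  have k1 : c * α ^ 2 ≤ d * M ^ 2 := by
    calc c * α ^ 2 = c * (α * α) := by ring
      _ ≤ c * ((j + 2) * (N - j)) := by gcongr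
      _ = d * ((N + 2) * (N + 1)) := e4.symm
      _ ≤ d * (M * M) := by gcongr; linarith
      _ = d * M ^ 2 := by ring
  have k2 : c * α ^ 2 / M ^ 2 ≤ d := by
    rw [div_le_iff₀ (by positivity)]; exact k1
  have : (1 - 2 * α ^ 2 / M ^ 2) * c = c - 2 * (c * α ^ 2 / M ^ 2) := by ring
  rw [this]
  linarith

lemma coeff_bound (α M : ℝ) (hα : 0 ≤ α) (hM : 0 < M) (hαM : 2 * α ^ 2 ≤ M ^ 2) (t : ℕ) :
    ∀ m j : ℕ, ((m + 2 * t : ℕ) : ℝ) ≤ M → 2 * t + α ≤ j → 2 * t + α ≤ ((m + 2 * t : ℕ) : ℝ) - j →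
      ((1 + X ^ 2) ^ t * (1 + X ^ 1) ^ m : ℝ[X]).coeff j ≤
        (1 - 2 * α ^ 2 / M ^ 2) ^ t * ((m + 2 * t).choose j : ℝ) := by
  have hb : 0 ≤ 1 - 2 * α ^ 2 / M ^ 2 := by
    rw [sub_nonneg, div_le_one (by positivity)]; exact hαM
  induction t with
  | zero =>
    intro m j _ _ _
    simp [coeff_one_add_X_pow]
  | succ t ih =>
    intro m j h1 h2 h3
    have hj2 : 2 ≤ j := by
      have : (2 : ℝ) ≤ j := by
        push_cast at h2
        have : (0 : ℝ) ≤ t := Nat.cast_nonneg _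
        linarith
      exact_mod_cast this
    obtain ⟨j, rfl⟩ := Nat.exists_eq_add_of_le' hj2
    have e : ((1 + X ^ 2) ^ (t + 1) * (1 + X ^ 1) ^ m : ℝ[X]) =
      ((1 + X ^ 2) ^ t * (1 + X ^ 1) ^ m) + ((1 + X ^ 2) ^ t * (1 + X ^ 1) ^ m) * X ^ 2 := by ring
    rw [e, coeff_add, coeff_mul_X_pow]
    push_cast at h1 h2 h3
    have ht0 : (0 : ℝ) ≤ t := Nat.cast_nonneg _
    have i1 := ih m (j + 2) (by push_cast; linarith) (by push_cast; linarith)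
      (by push_cast; linarith)
    have i2 := ih m j (by push_cast; linarith) (by linarith) (by push_cast; linarith)
    have hjN : j ≤ m + 2 * t := by
      have : (j : ℝ) ≤ ((m + 2 * t : ℕ) : ℝ) := by push_cast; linarith
      exact_mod_cast this
    have st := choose_step (m + 2 * t) j α M hα hM (by push_cast; linarith)
      (by push_cast; linarith) (by push_cast; linarith) hjN
    calc _ ≤ (1 - 2 * α ^ 2 / M ^ 2) ^ t * (((m + 2 * t).choose (j + 2) : ℝ) +
          (m + 2 * t).choose j) := by linarith
      _ ≤ (1 - 2 * α ^ 2 / M ^ 2) ^ t *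
          ((1 - 2 * α ^ 2 / M ^ 2) * ((m + 2 * t + 2).choose (j + 2) : ℝ)) := by gcongr
      _ = _ := by rw [pow_succ (1 - 2 * α ^ 2 / M ^ 2) t, mul_assoc]; rfl

lemma sum_chi_coeff {n : ℕ} (S : Finset (Fin n)) (j : ℕ) :
    ∑ x, chi S x * sphereInd n j x =
      ((1 - X ^ 1) ^ S.card * (1 + X ^ 1) ^ (n - S.card) : ℝ[X]).coeff j := by
  have h : ((1 - X ^ 1) ^ S.card * (1 + X ^ 1) ^ (n - S.card) : ℝ[X]) =
      ∑ x : Fin n → ZMod 2, C (chi S x) * X ^ hammingNorm x := by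
    have h1 : ((1 - X ^ 1) ^ S.card * (1 + X ^ 1) ^ (n - S.card) : ℝ[X]) =
        ∏ i : Fin n, ∑ a ∈ (univ : Finset (ZMod 2)),
          (if i ∈ S then C (sg a) else 1) * (if a = 0 then 1 else X) := by
      have hu : (univ : Finset (ZMod 2)) = {0, 1} := by decide
      rw [hu]
      have : ∀ i : Fin n, ∑ a ∈ ({0, 1} : Finset (ZMod 2)),
          (if i ∈ S then C (sg a) else 1) * (if a = 0 then 1 else X) =
          if i ∈ S then (1 - X ^ 1 : ℝ[X]) else 1 + X ^ 1 := by
        intro i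
        rw [Finset.sum_pair (by decide)]
        split_ifs <;> simp_all [sg_zero, sg_one, sub_eq_add_neg]
      simp_rw [this]
      rw [Finset.prod_ite]
      simp only [Finset.prod_const]
      congr 2
      · simp
      · have : (univ.filter fun i => i ∉ S) = Sᶜ := by ext; simp
        rw [this, Finset.card_compl, Fintype.card_fin]
    rw [h1, Finset.prod_univ_sum]
    simp only [Fintype.piFinset_univ]
    apply Finset.sum_congr rfl
    intro x _
    rw [Finset.prod_mul_distrib]
    congr 1
    · rw [chi, map_prod]
      rw [Finset.prod_ite]
      simp
    · rw [Finset.prod_ite]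
      simp [hammingNorm]
  rw [h, finsetSum_coeff]
  apply Finset.sum_congr rfl
  intro x _
  rw [coeff_C_mul, coeff_X_pow, sphereInd]
  simp only [eq_comm]

lemma kraw_half {n : ℕ} (ε : ℝ) (hε : 0 < ε) (hε2 : ε ≤ 1 / 2) (hn : 1 ≤ n) (j : ℕ)
    (hj1 : ε * n ≤ j) (hj2 : (j : ℝ) ≤ (1 - ε) * n) (S : Finset (Fin n))
    (hS : 2 * S.card ≤ n) :
    |∑ x, chi S x * sphereInd n j x| ≤
      2 * ((1 / 3 : ℝ) ^ S.card) ^ (ε ^ 3 / 8) * n.choose j := by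
  rw [sum_chi_coeff]
  set s := S.card
  have hn0 : (0 : ℝ) < n := by exact_mod_cast hn
  have hs0 : (0 : ℝ) ≤ s := Nat.cast_nonneg _
  have hS' : 2 * (s : ℝ) ≤ n := by exact_mod_cast hS
  set t := ⌊ε * s / 2⌋₊ with ht
  have ht1 : (t : ℝ) ≤ ε * s / 2 := Nat.floor_le (by positivity)
  have ht2 : ε * s / 2 < t + 1 := Nat.lt_floor_add_one _
  have hts : t ≤ s := by
    have : (t : ℝ) ≤ s := by nlinarith
    exact_mod_cast this
  have ht4 : 2 * (t : ℝ) ≤ ε * n / 2 := by nlinarith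
  have e : ((1 - X ^ 1) ^ s * (1 + X ^ 1) ^ (n - s) : ℝ[X]) =
      (1 - X ^ 2) ^ t * ((1 - X ^ 1) ^ (s - t) * (1 + X ^ 1) ^ (n - s - t)) := by
    obtain ⟨u, hu⟩ := Nat.exists_eq_add_of_le hts
    obtain ⟨v, hv⟩ := Nat.exists_eq_add_of_le (show t ≤ n - s by omega)
    have hu' : s - t = u := by omega
    have hv' : n - s - t = v := by omega
    rw [hu', hv', hv, hu]
    have : (1 - X ^ 2 : ℝ[X]) = (1 - X ^ 1) * (1 + X ^ 1) := by ring
    rw [this, mul_pow, pow_add, pow_add]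
    ring
  have d := ((dom_X 2).pow t).mul (((dom_X 1).pow (s - t)).mul ((dom_self 1).pow (n - s - t)))
  rw [e]
  refine (d j).trans ?_
  rw [← pow_add, show s - t + (n - s - t) = n - 2 * t by omega]
  have hnt : n - 2 * t + 2 * t = n := by omega
  have cb := coeff_bound (ε * n / 2) n (by positivity) hn0
    (by nlinarith [mul_pos hn0 hn0, mul_pos hε hn0]) t (n - 2 * t) j
    (by rw [hnt]) (by linarith) (by rw [hnt]; linarith)
  rw [hnt] at cb
  refine cb.trans ?_
  gcongr
  have e5 : 1 - 2 * (ε * n / 2) ^ 2 / (n : ℝ) ^ 2 = 1 - ε ^ 2 / 2 := by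
    field_simp
  rw [e5]
  have hb : 1 - ε ^ 2 / 2 ≤ Real.exp (-(ε ^ 2 / 2)) := by
    have := Real.add_one_le_exp (-(ε ^ 2 / 2)); linarith
  have h3 : Real.log 3 ≤ 2 := by
    have := Real.log_le_sub_one_of_pos (show (0 : ℝ) < 3 by norm_num); linarith
  have h2 : Real.exp (1 / 8) ≤ 2 := by
    have h := Real.exp_one_lt_d9
    by_contra hcon
    push Not at hcon
    have h8 : Real.exp 1 = Real.exp (1 / 8) ^ 8 := by
      rw [← Real.exp_nat_mul]; norm_num
    have : (2 : ℝ) ^ 8 ≤ Real.exp (1 / 8) ^ 8 := by gcongr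
    norm_num at this
    linarith
  have hr : ((1 / 3 : ℝ) ^ s) ^ (ε ^ 3 / 8) = Real.exp (-(Real.log 3 * s * (ε ^ 3 / 8))) := by
    rw [Real.rpow_def_of_pos (by positivity), Real.log_pow, one_div, Real.log_inv]
    congr 1; ring
  rw [hr]
  calc (1 - ε ^ 2 / 2) ^ t ≤ Real.exp (-(ε ^ 2 / 2)) ^ t := by
        apply pow_le_pow_left₀ _ hb
        nlinarith
    _ = Real.exp (t * (-(ε ^ 2 / 2))) := by rw [← Real.exp_nat_mul]
    _ ≤ Real.exp (1 / 8 + -(Real.log 3 * s * (ε ^ 3 / 8))) := by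
        apply Real.exp_le_exp.mpr
        have a1 : Real.log 3 * (s * (ε ^ 3 / 8)) ≤ 2 * (s * (ε ^ 3 / 8)) := by gcongr
        have a2 : (ε * s / 2) * (ε ^ 2 / 2) ≤ (t + 1) * (ε ^ 2 / 2) := by gcongr
        have a3 : ε ^ 2 ≤ 1 / 4 := by nlinarith
        nlinarith
    _ = Real.exp (1 / 8) * Real.exp (-(Real.log 3 * s * (ε ^ 3 / 8))) := Real.exp_add _ _
    _ ≤ _ := by gcongr

end

lemma kraw_compl {n : ℕ} (S : Finset (Fin n)) (j : ℕ) :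
    |∑ x, chi Sᶜ x * sphereInd n j x| = |∑ x, chi S x * sphereInd n j x| := by
  have : ∑ x, chi Sᶜ x * sphereInd n j x = (-1) ^ j * ∑ x, chi S x * sphereInd n j x := by
    rw [Finset.mul_sum]
    apply Finset.sum_congr rfl
    intro x _
    rw [← chi_compl, chi_univ_eq]
    unfold sphereInd
    split_ifs with h
    · rw [h]; ring
    · simp
  rw [this, abs_mul]; simp

lemma kraw_s7 {n : ℕ} (ε : ℝ) (hε : 0 < ε) (hε2 : ε ≤ 1 / 2) (hn : 1 ≤ n) (j : ℕ)
    (hj1 : ε * n ≤ j) (hj2 : (j : ℝ) ≤ (1 - ε) * n) (S : Finset (Fin n)) :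
    |∑ x, chi S x * sphereInd n j x| ≤
      2 * (((1 / 3 : ℝ) ^ S.card) ^ (ε ^ 3 / 8) + ((1 / 3 : ℝ) ^ Sᶜ.card) ^ (ε ^ 3 / 8))
        * n.choose j := by
  have p1 : 0 ≤ ((1 / 3 : ℝ) ^ S.card) ^ (ε ^ 3 / 8) := by positivity
  have p2 : 0 ≤ ((1 / 3 : ℝ) ^ Sᶜ.card) ^ (ε ^ 3 / 8) := by positivity
  have hc : S.card + Sᶜ.card = n := by rw [Finset.card_add_card_compl, Fintype.card_fin]
  rcases le_total (2 * S.card) n with h | h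
  · refine (kraw_half ε hε hε2 hn j hj1 hj2 S h).trans ?_
    gcongr; linarith
  · rw [← kraw_compl]
    refine (kraw_half ε hε hε2 hn j hj1 hj2 Sᶜ (by omega)).trans ?_
    gcongr; linarith

lemma inner_eq {n : ℕ} (f : (Fin n → ZMod 2) → ℝ) (j : ℕ) :
    innerP n (conv n f f) (sphereInd n j) =
      ∑ S, fh f S ^ 2 * ∑ x, chi S x * sphereInd n j x := by
  have h : ∀ x, ((2 : ℝ) ^ n)⁻¹ * conv n f f x = ∑ S, fh f S ^ 2 * chi S x := by
    intro x
    have := pairing f (fun S => fh f S * chi S x)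
    have e : ∀ y, ∑ S, fh f S * chi S x * chi S y = f (x + y) := by
      intro y
      rw [fh_inv f (x + y)]
      simp_rw [chi_add, mul_assoc]
    simp_rw [e] at this
    unfold conv
    simp_rw [mul_comm (f (x + _))]
    rw [this]
    apply Finset.sum_congr rfl
    intro S _
    ring
  unfold innerP
  rw [Finset.mul_sum]
  simp_rw [← mul_assoc, h, Finset.mul_sum, Finset.sum_mul]
  rw [Finset.sum_comm]
  simp_rw [mul_assoc]

/-- Jensen step. -/
lemma jensen {n : ℕ} (v q : Finset (Fin n) → ℝ) (hv : ∀ S, 0 ≤ v S) (hq : ∀ S, 0 ≤ q S)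
    (F : ℝ) (hF : 0 < F) (hvF : ∑ S, v S = F) (r θ : ℝ) (h0 : 0 ≤ θ) (h1 : θ ≤ 1)
    (h : ∑ S, q S * v S ≤ F * r) :
    ∑ S, v S * (q S) ^ θ ≤ F * r ^ θ := by
  have J := (Real.concaveOn_rpow h0 h1).le_map_sum (t := univ) (w := fun S => v S / F) (p := q)
    (fun S _ => div_nonneg (hv S) hF.le) (by rw [← Finset.sum_div, hvF, div_self hF.ne'])
    (fun S _ => hq S)
  simp only [smul_eq_mul] at J
  have e1 : ∑ S, v S / F * q S ≤ r := by
    have : ∑ S, v S / F * q S = (∑ S, q S * v S) / F := by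
      rw [Finset.sum_div]; apply Finset.sum_congr rfl; intro S _; ring
    rw [this, div_le_iff₀ hF]; linarith
  have e0 : 0 ≤ ∑ S, v S / F * q S :=
    Finset.sum_nonneg fun S _ => mul_nonneg (div_nonneg (hv S) hF.le) (hq S)
  have J2 := J.trans (Real.rpow_le_rpow e0 e1 h0)
  have e2 : ∑ S, v S * (q S) ^ θ = F * ∑ S, v S / F * (q S) ^ θ := by
    rw [Finset.mul_sum]; apply Finset.sum_congr rfl; intro S _; field_simp
  rw [e2]
  gcongr

lemma pnorm_two {n : ℕ} (f : (Fin n → ZMod 2) → ℝ) :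
    pnormR n 2 f ^ 2 = ((2 : ℝ) ^ n)⁻¹ * ∑ x, f x ^ 2 := by
  unfold pnormR
  rw [← Real.rpow_natCast, ← Real.rpow_mul (by positivity), Real.rpow_neg (by norm_num),
    Real.rpow_natCast]
  norm_num

lemma pnorm_one {n : ℕ} (f : (Fin n → ZMod 2) → ℝ) :
    pnormR n 1 f = ((2 : ℝ) ^ n)⁻¹ * ∑ x, |f x| := by
  unfold pnormR
  rw [Real.rpow_neg (by norm_num), Real.rpow_natCast]
  norm_num

theorem sumset_sphere_density_bound :
    ∀ ε : ℝ, 0 < ε → ε ≤ 1 / 2 →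
      ∃ C₁ C₂ : ℝ, 0 < C₁ ∧ 0 < C₂ ∧
        ∀ n : ℕ, 1 ≤ n → ∀ j : ℕ, ε * n ≤ j → (j : ℝ) ≤ (1 - ε) * n →
          ∀ lam : ℝ, 0 < lam →
            ∀ φ : (Fin n → ZMod 2) → ℝ, φ ≠ 0 → (∀ x, 0 ≤ φ x) →
              lam * (pnormR n 2 φ) ^ 2 ≤
                  innerP n (conv n φ φ) (sphereInd n j) / (n.choose j : ℝ) →
              (pnormR n 2 φ) ^ 2 / (pnormR n 1 φ) ^ 2 ≤ (1 / C₁) * lam ^ (-C₂) := by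
  intro ε hε hε2
  set θ : ℝ := ε ^ 3 / 8 with hθ
  have hθ0 : 0 < θ := by positivity
  have hθ1 : θ ≤ 1 := by
    have : ε ^ 3 ≤ 1 := pow_le_one₀ hε.le (by linarith)
    linarith
  refine ⟨1 / 4 ^ (2 / θ), 2 / θ, by positivity, by positivity, ?_⟩
  intro n hn j hj1 hj2 lam hlam φ hφ _ hmain
  rw [pnorm_two] at hmain ⊢
  rw [pnorm_one]
  set F := ((2 : ℝ) ^ n)⁻¹ * ∑ x, φ x ^ 2 with hFdef
  set L := ((2 : ℝ) ^ n)⁻¹ * ∑ x, |φ x| with hLdef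
  obtain ⟨x₀, hx₀⟩ := Function.ne_iff.mp hφ
  simp only [Pi.zero_apply] at hx₀
  have hF : 0 < F := by
    apply mul_pos (by positivity)
    exact Finset.sum_pos' (fun _ _ => by positivity) ⟨x₀, Finset.mem_univ _, by positivity⟩
  have hL : 0 < L := by
    apply mul_pos (by positivity)
    exact Finset.sum_pos' (fun _ _ => by positivity) ⟨x₀, Finset.mem_univ _, by positivity⟩
  have hP : ∑ S, fh φ S ^ 2 = F := (parseval φ).symm
  set r : ℝ := L / √F with hr
  have hsF : 0 < √F := Real.sqrt_pos.mpr hF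
  have hr0 : 0 < r := by positivity
  have hFr : F * r = L * √F := by
    rw [hr]; field_simp; rw [Real.sq_sqrt hF.le]
  have hFr2 : L ^ 2 * F = (F * r) ^ 2 := by
    rw [hFr, mul_pow L, Real.sq_sqrt hF.le]
  have q1 : ∑ S, (1 / 3 : ℝ) ^ S.card * fh φ S ^ 2 ≤ F * r := by
    have := hyper φ
    rw [← hFdef, ← hLdef, hFr2] at this
    exact (abs_le_of_sq_le_sq' this (by positivity)).2
  have q2 : ∑ S, (1 / 3 : ℝ) ^ Sᶜ.card * fh φ S ^ 2 ≤ F * r := by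
    have := hyper (fun x => φ x * chi univ x)
    have s1 : ∀ x, (φ x * chi univ x) ^ 2 = φ x ^ 2 := by
      intro x; rw [mul_pow, ← sq_abs (chi univ x), chi_univ_abs]; ring
    simp only [abs_mul, chi_univ_abs, mul_one, s1, fh_twist] at this
    rw [← hFdef, ← hLdef, hFr2] at this
    have h2 := (abs_le_of_sq_le_sq' this (by positivity)).2
    rw [← Equiv.sum_comp (Function.Involutive.toPerm _
      (compl_involutive : Function.Involutive (compl : Finset (Fin n) → Finset (Fin n))))] at h2
    simpa using h2
  have j1 := jensen (fun S => fh φ S ^ 2) (fun S => (1 / 3 : ℝ) ^ S.card)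
    (fun S => sq_nonneg _) (fun S => by positivity) F hF hP r θ hθ0.le hθ1 q1
  have j2 := jensen (fun S => fh φ S ^ 2) (fun S => (1 / 3 : ℝ) ^ Sᶜ.card)
    (fun S => sq_nonneg _) (fun S => by positivity) F hF hP r θ hθ0.le hθ1 q2
  have hjn : j ≤ n := by
    have hn0 : (0 : ℝ) ≤ n := Nat.cast_nonneg _
    have : (j : ℝ) ≤ n := by nlinarith
    exact_mod_cast this
  have hch : (0 : ℝ) < n.choose j := by exact_mod_cast Nat.choose_pos hjn
  have hup : innerP n (conv n φ φ) (sphereInd n j) / (n.choose j : ℝ) ≤ 4 * (F * r ^ θ) := by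
    rw [div_le_iff₀ hch, inner_eq]
    calc _ ≤ ∑ S, fh φ S ^ 2 * (2 * (((1 / 3 : ℝ) ^ S.card) ^ θ + ((1 / 3 : ℝ) ^ Sᶜ.card) ^ θ)
              * n.choose j) := by
          apply Finset.sum_le_sum
          intro S _
          gcongr
          exact (le_abs_self _).trans (kraw_s7 ε hε hε2 hn j hj1 hj2 S)
      _ = 2 * (∑ S, fh φ S ^ 2 * ((1 / 3 : ℝ) ^ S.card) ^ θ +
            ∑ S, fh φ S ^ 2 * ((1 / 3 : ℝ) ^ Sᶜ.card) ^ θ) * n.choose j := by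
          rw [← Finset.sum_add_distrib, Finset.mul_sum, Finset.sum_mul]
          apply Finset.sum_congr rfl
          intro S _
          ring
      _ ≤ 2 * (F * r ^ θ + F * r ^ θ) * n.choose j := by gcongr
      _ = _ := by ring
  have hl : lam ≤ 4 * r ^ θ := by
    have : lam * F ≤ (4 * r ^ θ) * F := by linarith
    exact le_of_mul_le_mul_right this hF
  have hR : F / L ^ 2 = r ^ (-2 : ℝ) := by
    rw [Real.rpow_neg hr0.le, hr, show (2 : ℝ) = ((2 : ℕ) : ℝ) by norm_num, Real.rpow_natCast,
      div_pow, Real.sq_sqrt hF.le, inv_div]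
  rw [hR, one_div_one_div]
  have h5 : (4 * r ^ θ) ^ (-(2 / θ)) ≤ lam ^ (-(2 / θ)) :=
    Real.rpow_le_rpow_of_nonpos hlam hl (by rw [neg_nonpos]; positivity)
  have h6 : (4 * r ^ θ) ^ (-(2 / θ)) = (4 ^ (2 / θ))⁻¹ * r ^ (-2 : ℝ) := by
    rw [Real.mul_rpow (by norm_num) (by positivity), ← Real.rpow_mul hr0.le,
      Real.rpow_neg (by norm_num)]
    congr 2
    field_simp
  rw [h6] at h5
  have h7 : (0 : ℝ) < 4 ^ (2 / θ) := by positivity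
  calc r ^ (-2 : ℝ) = 4 ^ (2 / θ) * ((4 ^ (2 / θ))⁻¹ * r ^ (-2 : ℝ)) := by
        field_simp
    _ ≤ _ := by gcongr
end

section
/- For every ε ∈ (0, 1/2] there exist constants C₁, C₂ > 0 such that for every n ≥ 1, every λ > 0, and every nonempty set A ⊆ F₂ⁿ: if there exists an integer j with εn ≤ j ≤ (1−ε)n such that 2ⁿ · (1_A * 1_A, 1_{S_j}) / (|S_j| · |A|) ≥ λ, then |A| ≥ C₁ λ^{C₂} 2ⁿ. In words, if the sumset A+A covers a λ-fraction (counted with multiplicity normalized by |A|) of some Hamming sphere of non-degenerate radius, then A has cardinality a constant multiple of 2ⁿ. -/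
open Finset

/-- Indicator function of a finite set `A ⊆ 𝔽₂ⁿ`. -/
def indSet (n : ℕ) (A : Finset (Fin n → ZMod 2)) : (Fin n → ZMod 2) → ℝ :=
  fun x => if x ∈ A then 1 else 0


/-- Stirling main term -/
noncomputable def stF (n : ℕ) : ℝ := √n * (n / Real.exp 1) ^ n

lemma stF_pos (n : ℕ) (hn : 1 ≤ n) : 0 < stF n := by
  have : (0:ℝ) < n := by exact_mod_cast hn
  unfold stF; positivity

lemma stF_le (n : ℕ) : stF n ≤ n.factorial := by
  refine le_trans ?_ (Stirling.le_factorial_stirling n)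
  unfold stF
  gcongr
  have := Real.pi_gt_three
  have : (0:ℝ) ≤ n := by positivity
  nlinarith

lemma le_stF (n : ℕ) (hn : 1 ≤ n) : (n.factorial : ℝ) ≤ 3 * stF n := by
  obtain ⟨m, rfl⟩ : ∃ m, n = m + 1 := ⟨n - 1, by omega⟩
  have h := Stirling.stirlingSeq'_antitone (Nat.zero_le m)
  simp only [Function.comp, Nat.succ_eq_add_one, zero_add, Stirling.stirlingSeq_one] at h
  unfold Stirling.stirlingSeq at h
  have hp : (0:ℝ) < ((m+1:ℕ):ℝ) := by positivity
  rw [div_le_iff₀ (by positivity), Real.sqrt_mul (by norm_num)] at h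
  unfold stF
  have h2 : (0:ℝ) < √2 := by positivity
  have e3 := Real.exp_one_lt_three
  calc _ ≤ _ := h
    _ = Real.exp 1 * (√((m+1:ℕ):ℝ) * (((m+1:ℕ):ℝ) / Real.exp 1) ^ (m+1)) := by
        field_simp
    _ ≤ _ := by gcongr

lemma pow_le_exp (t : ℝ) (ht : 0 ≤ t) (a : ℕ) : t ^ a ≤ Real.exp (a * (t - 1)) := by
  rw [Real.exp_nat_mul]
  gcongr
  have := Real.add_one_le_exp (t - 1)
  linarith

lemma amgm (a b : ℕ) (ha : 1 ≤ a) (hb : 1 ≤ b) (x y : ℝ) (hx : 0 < x) (hy : 0 < y) :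
    ((a + b : ℕ) : ℝ) ^ (a + b) * x ^ a * y ^ b ≤ (a:ℝ) ^ a * (b:ℝ) ^ b * (x + y) ^ (a + b) := by
  have ha' : (0:ℝ) < a := by exact_mod_cast ha
  have hb' : (0:ℝ) < b := by exact_mod_cast hb
  have h1 := pow_le_exp (x * (a + b) / (a * (x + y))) (by positivity) a
  have h2 := pow_le_exp (y * (a + b) / (b * (x + y))) (by positivity) b
  have h3 := mul_le_mul h1 h2 (by positivity) (by positivity)
  rw [← Real.exp_add] at h3
  have : (a:ℝ) * (x * (a + b) / (a * (x + y)) - 1) + b * (y * (a + b) / (b * (x + y)) - 1) = 0 := by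
    field_simp; ring
  rw [this, Real.exp_zero] at h3
  simp only [div_pow, mul_pow] at h3
  rw [div_mul_div_comm, div_le_one (by positivity)] at h3
  push_cast
  rw [pow_add, pow_add]
  linarith

lemma choose_stirling (a b : ℕ) (ha : 1 ≤ a) (hb : 1 ≤ b) :
    ((a + b).choose a : ℝ) * ((a.factorial:ℝ) * b.factorial) = (a+b).factorial := by
  have := Nat.add_choose_mul_factorial_mul_factorial a b
  rw [Nat.choose_symm_add, ← mul_assoc]; exact_mod_cast this

lemma choose_upper (a b : ℕ) (ha : 1 ≤ a) (hb : 1 ≤ b) (x y : ℝ) (hx : 0 < x) (hy : 0 < y) :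
    ((a + b).choose a : ℝ) * x ^ a * y ^ b * (√a * √b) ≤ 3 * √((a+b : ℕ):ℝ) * (x + y) ^ (a + b) := by
  have ha' : (0:ℝ) < a := by exact_mod_cast ha
  have hb' : (0:ℝ) < b := by exact_mod_cast hb
  have h := choose_stirling a b ha hb
  have h1 := le_stF (a + b) (by omega)
  have h2 := mul_le_mul (stF_le a) (stF_le b) (stF_pos b hb).le (by positivity)
  have h3 : ((a + b).choose a : ℝ) * (stF a * stF b) ≤ 3 * stF (a + b) := by
    refine le_trans ?_ h1
    rw [← h]; gcongr
  unfold stF at h3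
  simp only [div_pow] at h3
  have h4 : ((a + b).choose a : ℝ) * (√a * √b) * ((a:ℝ)^a * (b:ℝ)^b) ≤ 3 * √((a+b : ℕ):ℝ) * ((a+b : ℕ):ℝ)^(a+b) := by
    have e : (0:ℝ) < Real.exp 1 ^ (a+b) := by positivity
    have := mul_le_mul_of_nonneg_right h3 e.le
    refine le_of_eq_of_le ?_ (this.trans_eq ?_) <;> (rw [pow_add (Real.exp 1)]; field_simp)
  have h5 := amgm a b ha hb x y hx hy
  have hP : (0:ℝ) < (a:ℝ)^a * (b:ℝ)^b := by positivity
  refine le_of_mul_le_mul_right ?_ hP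
  calc _ = (((a + b).choose a : ℝ) * (√a * √b) * ((a:ℝ)^a * (b:ℝ)^b)) * (x^a * y^b) := by ring
    _ ≤ (3 * √((a+b : ℕ):ℝ) * ((a+b : ℕ):ℝ)^(a+b)) * (x^a * y^b) := by gcongr
    _ = 3 * √((a+b : ℕ):ℝ) * (((a+b : ℕ):ℝ)^(a+b) * x^a * y^b) := by ring
    _ ≤ 3 * √((a+b : ℕ):ℝ) * ((a:ℝ) ^ a * (b:ℝ) ^ b * (x + y) ^ (a + b)) := by gcongr
    _ = _ := by ring

lemma choose_lower (a b : ℕ) (ha : 1 ≤ a) (hb : 1 ≤ b) (p q : ℝ) (hp : p = a / (a + b))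
    (hq : q = b / (a + b)) :
    1 ≤ 9 * √((a+b : ℕ):ℝ) * (((a + b).choose a : ℝ) * p ^ a * q ^ b) := by
  have ha' : (0:ℝ) < a := by exact_mod_cast ha
  have hb' : (0:ℝ) < b := by exact_mod_cast hb
  have h := choose_stirling a b ha hb
  have h1 := stF_le (a + b)
  have h2 := mul_le_mul (le_stF a ha) (le_stF b hb) (by positivity) (by have := stF_pos a ha; positivity)
  have h3 : stF (a + b) ≤ ((a + b).choose a : ℝ) * ((3 * stF a) * (3 * stF b)) := by
    refine le_trans h1 ?_
    rw [← h]; gcongr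
  unfold stF at h3
  simp only [div_pow] at h3
  have h4 : √((a+b : ℕ):ℝ) * ((a+b : ℕ):ℝ)^(a+b) ≤ 9 * (((a + b).choose a : ℝ) * (√a * √b) * ((a:ℝ)^a * (b:ℝ)^b)) := by
    have e : (0:ℝ) < Real.exp 1 ^ (a+b) := by positivity
    have := mul_le_mul_of_nonneg_right h3 e.le
    refine le_of_eq_of_le ?_ (this.trans_eq ?_) <;> (rw [pow_add (Real.exp 1)]; field_simp)
    ring
  have h6 : √(a:ℝ) * √b ≤ √((a+b : ℕ):ℝ) * √((a+b : ℕ):ℝ) := by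
    gcongr <;> simp
  have hm : (0:ℝ) < ((a+b : ℕ):ℝ) := by positivity
  have hs : (0:ℝ) < √((a+b : ℕ):ℝ) := by positivity
  have h7 : √((a+b : ℕ):ℝ) * ((a+b : ℕ):ℝ)^(a+b) ≤ 9 * (((a + b).choose a : ℝ) * (√((a+b : ℕ):ℝ) * √((a+b : ℕ):ℝ)) * ((a:ℝ)^a * (b:ℝ)^b)) := by
    refine h4.trans ?_
    gcongr
  have h8 : ((a+b : ℕ):ℝ)^(a+b) ≤ 9 * √((a+b : ℕ):ℝ) * (((a + b).choose a : ℝ) * ((a:ℝ)^a * (b:ℝ)^b)) := by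
    refine le_of_mul_le_mul_left ?_ hs
    linarith
  have h9 : p ^ a * q ^ b = ((a:ℝ)^a * (b:ℝ)^b) / ((a+b : ℕ):ℝ)^(a+b) := by
    rw [hp, hq, div_pow, div_pow, pow_add]; push_cast; field_simp
  rw [mul_assoc ((a + b).choose a : ℝ), h9, mul_div_assoc', mul_div_assoc', le_div_iff₀ (by positivity)]
  linarith

lemma rpow_diff (r : ℝ) (h0 : 0 < r) (h1 : r ≤ 1) (y : ℝ) (hy : 0 ≤ y) (hy1 : y < 1) :
    2 * r * y ≤ (1 + y) ^ r - (1 - y) ^ r := by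
  have hd : ∀ x ∈ Set.Ico (0:ℝ) 1, HasDerivAt (fun y : ℝ => (1 + y) ^ r - (1 - y) ^ r - 2 * r * y)
      (r * (1 + x) ^ (r - 1) + r * (1 - x) ^ (r - 1) - 2 * r) x := by
    intro x hx
    have a1 : HasDerivAt (fun y : ℝ => (1 + y) ^ r) (1 * r * (1 + x) ^ (r - 1)) x :=
      HasDerivAt.rpow_const ((hasDerivAt_id x).const_add 1) (Or.inl (by have := hx.1; simp; linarith))
    have a2 : HasDerivAt (fun y : ℝ => (1 - y) ^ r) (-1 * r * (1 - x) ^ (r - 1)) x :=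
      HasDerivAt.rpow_const ((hasDerivAt_id x).const_sub 1) (Or.inl (by have := hx.2; simp; linarith))
    have a3 : HasDerivAt (fun y : ℝ => 2 * r * y) (2 * r * 1) x := (hasDerivAt_id x).const_mul _
    exact ((a1.sub a2).sub a3).congr_deriv (by ring)
  have hm : MonotoneOn (fun y : ℝ => (1 + y) ^ r - (1 - y) ^ r - 2 * r * y) (Set.Ico 0 1) := by
    apply monotoneOn_of_deriv_nonneg (convex_Ico 0 1)
    · intro x hx; exact (hd x hx).continuousAt.continuousWithinAt
    · intro x hx; rw [interior_Ico] at hx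
      exact (hd x ⟨hx.1.le, hx.2⟩).differentiableAt.differentiableWithinAt
    · intro x hx; rw [interior_Ico] at hx
      rw [(hd x ⟨hx.1.le, hx.2⟩).deriv]
      have p1 : 0 < (1 + x) := by linarith [hx.1]
      have p2 : 0 < (1 - x) := by linarith [hx.2]
      have q1 := Real.rpow_pos_of_pos p1 (r - 1)
      have q2 := Real.rpow_pos_of_pos p2 (r - 1)
      have : 1 ≤ (1 + x) ^ (r - 1) * (1 - x) ^ (r - 1) := by
        rw [← Real.mul_rpow p1.le p2.le]
        apply Real.one_le_rpow_of_pos_of_le_one_of_nonpos <;> nlinarith [hx.1]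
      have : 2 ≤ (1 + x) ^ (r - 1) + (1 - x) ^ (r - 1) := by
        nlinarith [sq_nonneg ((1 + x) ^ (r - 1) - (1 - x) ^ (r - 1))]
      nlinarith
  have := hm ⟨le_refl 0, one_pos⟩ ⟨hy, hy1⟩ hy
  simp at this
  linarith

lemma two_point_y (p : ℝ) (h0 : 1 < p) (h1 : p ≤ 2) (y : ℝ) (hy : 0 ≤ y) (hy1 : y ≤ 1) :
    1 + p * (p - 1) / 2 * y ^ 2 ≤ ((1 + y) ^ p + (1 - y) ^ p) / 2 := by
  have hd : ∀ x ∈ Set.Icc (0:ℝ) 1, HasDerivAt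
      (fun y : ℝ => (1 + y) ^ p + (1 - y) ^ p - p * (p - 1) * y ^ 2)
      (p * ((1 + x) ^ (p - 1) - (1 - x) ^ (p - 1) - 2 * (p - 1) * x)) x := by
    intro x hx
    have a1 : HasDerivAt (fun y : ℝ => (1 + y) ^ p) (1 * p * (1 + x) ^ (p - 1)) x :=
      HasDerivAt.rpow_const ((hasDerivAt_id x).const_add 1) (Or.inr h0.le)
    have a2 : HasDerivAt (fun y : ℝ => (1 - y) ^ p) (-1 * p * (1 - x) ^ (p - 1)) x :=
      HasDerivAt.rpow_const ((hasDerivAt_id x).const_sub 1) (Or.inr h0.le)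
    have a3 : HasDerivAt (fun y : ℝ => p * (p - 1) * y ^ 2) (p * (p - 1) * (2 * x)) x := by
      simpa using (hasDerivAt_pow 2 x).const_mul (p * (p - 1))
    exact ((a1.add a2).sub a3).congr_deriv (by ring)
  have hm : MonotoneOn (fun y : ℝ => (1 + y) ^ p + (1 - y) ^ p - p * (p - 1) * y ^ 2)
      (Set.Icc 0 1) := by
    apply monotoneOn_of_deriv_nonneg (convex_Icc 0 1)
    · intro x hx; exact (hd x hx).continuousAt.continuousWithinAt
    · intro x hx; rw [interior_Icc] at hx
      exact (hd x ⟨hx.1.le, hx.2.le⟩).differentiableAt.differentiableWithinAt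
    · intro x hx; rw [interior_Icc] at hx
      rw [(hd x ⟨hx.1.le, hx.2.le⟩).deriv]
      have := rpow_diff (p - 1) (by linarith) (by linarith) x hx.1.le hx.2
      apply mul_nonneg <;> linarith
  have := hm ⟨le_refl 0, zero_le_one⟩ ⟨hy, hy1⟩ hy
  norm_num at this
  linarith

lemma two_point_sq (p : ℝ) (h0 : 1 < p) (h1 : p ≤ 2) (ρ : ℝ) (hr0 : 0 ≤ ρ) (hr : ρ ≤ p - 1)
    (a b : ℝ) (ha : 0 ≤ a) (hb : 0 ≤ b) :
    ((a + b) / 2) ^ 2 + ρ * ((a - b) / 2) ^ 2 ≤ (((a ^ p + b ^ p) / 2) ^ (1 / p)) ^ 2 := by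
  wlog hab : b ≤ a generalizing a b with H
  · have := H b a hb ha (by linarith)
    rw [add_comm (b ^ p)] at this
    nlinarith
  rcases hb.eq_or_lt with h | hb'
  all_goals rcases ha.eq_or_lt with h' | ha'
  · subst h; subst h'
    simp; positivity
  all_goals try linarith
  all_goals
    have hu : 0 < (a + b) / 2 := by linarith
    obtain ⟨y, hy⟩ : ∃ y, (a - b) / 2 = (a + b) / 2 * y := ⟨(a - b) / 2 / ((a + b) / 2), by field_simp⟩
    set u := (a + b) / 2 with hud
    have hy0 : 0 ≤ y := by
      by_contra! hh; nlinarith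
    have hy1 : y ≤ 1 := by
      by_contra! hh; nlinarith
    have ea : a = u * (1 + y) := by rw [mul_add, ← hy, hud]; ring
    have eb : b = u * (1 - y) := by rw [mul_sub, ← hy, hud]; ring
    have key := two_point_y p h0 h1 y hy0 hy1
    have hbern : (1 + ρ * y ^ 2) ^ (p / 2) ≤ 1 + p / 2 * (ρ * y ^ 2) := by
      apply rpow_one_add_le_one_add_mul_self
      · have : 0 ≤ ρ * y ^ 2 := by positivity
        linarith
      · linarith
      · linarith
    have h3 : (1 + ρ * y ^ 2) ^ (p / 2) ≤ ((1 + y) ^ p + (1 - y) ^ p) / 2 := by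
      refine hbern.trans (le_trans ?_ key)
      have : ρ * y ^ 2 ≤ (p - 1) * y ^ 2 := by gcongr
      nlinarith
    have h4 : 1 + ρ * y ^ 2 ≤ ((((1 + y) ^ p + (1 - y) ^ p) / 2) ^ (1 / p)) ^ 2 := by
      have hpos : 0 ≤ 1 + ρ * y ^ 2 := by positivity
      have := Real.rpow_le_rpow (by positivity) h3 (show 0 ≤ 2 / p by positivity)
      rw [← Real.rpow_mul hpos, show p / 2 * (2 / p) = 1 by field_simp, Real.rpow_one] at this
      refine this.trans_eq ?_
      rw [← Real.rpow_natCast, ← Real.rpow_mul]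
      · congr 1; push_cast; ring
      · have : 0 ≤ 1 - y := by linarith
        positivity
    have h5 : (a ^ p + b ^ p) / 2 = u ^ p * (((1 + y) ^ p + (1 - y) ^ p) / 2) := by
      rw [ea, eb, Real.mul_rpow hu.le (by linarith), Real.mul_rpow hu.le (by linarith)]; ring
    have hnn : 0 ≤ ((1 + y) ^ p + (1 - y) ^ p) / 2 := by
      have : 0 ≤ 1 - y := by linarith
      positivity
    rw [h5, Real.mul_rpow (by positivity) hnn, ← Real.rpow_mul hu.le,
      show p * (1 / p) = 1 by field_simp, Real.rpow_one, hy, mul_pow, mul_pow]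
    nlinarith [sq_nonneg u]

lemma two_point (p : ℝ) (h0 : 1 < p) (h1 : p ≤ 2) (θ : ℝ) (hr : |1 - 2 * θ| ≤ p - 1)
    (a b c d : ℝ) (ha : 0 ≤ a) (hb : 0 ≤ b) (hc : 0 ≤ c) (hd : 0 ≤ d) :
    (1 - θ) * (a * c + b * d) + θ * (a * d + b * c) ≤
      2 ^ (1 - 2 / p) * (a ^ p + b ^ p) ^ (1 / p) * (c ^ p + d ^ p) ^ (1 / p) := by
  have k1 := two_point_sq p h0 h1 _ (abs_nonneg _) hr a b ha hb
  have k2 := two_point_sq p h0 h1 _ (abs_nonneg _) hr c d hc hd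
  set ρ := |1 - 2 * θ| with hρ
  have hX : 0 ≤ ((a ^ p + b ^ p) / 2) ^ (1 / p) := by positivity
  have hY : 0 ≤ ((c ^ p + d ^ p) / 2) ^ (1 / p) := by positivity
  have h2 : 2 ^ (1 - 2 / p) * (a ^ p + b ^ p) ^ (1 / p) * (c ^ p + d ^ p) ^ (1 / p) =
     2 * (((a ^ p + b ^ p) / 2) ^ (1 / p) * ((c ^ p + d ^ p) / 2) ^ (1 / p)) := by
    rw [Real.div_rpow (by positivity) (by norm_num), Real.div_rpow (by positivity) (by norm_num),
      Real.rpow_sub (by norm_num), show (2:ℝ) / p = 1 / p + 1 / p by ring, Real.rpow_add (by norm_num)]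
    simp only [Real.rpow_one]
    field_simp
  rw [h2]
  set X := ((a ^ p + b ^ p) / 2) ^ (1 / p)
  set Y := ((c ^ p + d ^ p) / 2) ^ (1 / p)
  have h3 : (1 - θ) * (a * c + b * d) + θ * (a * d + b * c) =
    2 * ((a + b) / 2 * ((c + d) / 2) + (1 - 2 * θ) * ((a - b) / 2 * ((c - d) / 2))) := by ring
  rw [h3]
  gcongr
  set u := (a + b) / 2
  set v := (a - b) / 2
  set u' := (c + d) / 2
  set v' := (c - d) / 2
  have h4 : (1 - 2 * θ) * (v * v') ≤ ρ * (|v| * |v'|) := by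
    rw [← abs_mul, hρ, ← abs_mul]; exact le_abs_self _
  have h5 : (u * u' + ρ * (|v| * |v'|)) ^ 2 ≤ (u ^ 2 + ρ * v ^ 2) * (u' ^ 2 + ρ * v' ^ 2) := by
    have : 0 ≤ ρ := abs_nonneg _
    have e1 : v ^ 2 = |v| ^ 2 := (sq_abs v).symm
    have e2 : v' ^ 2 = |v'| ^ 2 := (sq_abs v').symm
    rw [e1, e2]
    nlinarith [mul_nonneg this (sq_nonneg (u * |v'| - u' * |v|))]
  have h6 : (u * u' + ρ * (|v| * |v'|)) ^ 2 ≤ (X * Y) ^ 2 := by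
    rw [mul_pow]
    refine h5.trans ?_
    have : 0 ≤ ρ := abs_nonneg _
    gcongr
  have := abs_le_of_sq_le_sq h6 (by positivity)
  linarith [le_abs_self (u * u' + ρ * (|v| * |v'|))]

def kern (θ : ℝ) (n : ℕ) (x : Fin n → ZMod 2) : ℝ := ∏ i, (if x i = 0 then 1 - θ else θ)

lemma kern_eq (θ : ℝ) (n : ℕ) (x : Fin n → ZMod 2) :
    kern θ n x = θ ^ hammingNorm x * (1 - θ) ^ (n - hammingNorm x) := by
  unfold kern hammingNorm
  rw [Finset.prod_ite, Finset.prod_const, Finset.prod_const, mul_comm]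
  congr 2
  have := Finset.card_filter_add_card_filter_not (s := (univ : Finset (Fin n))) (fun i => x i = 0)
  simp at this
  simp
  omega

lemma sum_cons (n : ℕ) (F : (Fin (n+1) → ZMod 2) → ℝ) :
    ∑ x, F x = ∑ x : Fin n → ZMod 2, F (Fin.cons 0 x) + ∑ x : Fin n → ZMod 2, F (Fin.cons 1 x) := by
  rw [← (Fin.consEquiv (fun _ : Fin (n+1) => ZMod 2)).sum_comp, Fintype.sum_prod_type]
  exact Fin.sum_univ_two (fun a : Fin 2 => ∑ x : Fin n → ZMod 2, F (Fin.cons (α := fun _ => ZMod 2) a x))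

lemma kern_cons (θ : ℝ) (n : ℕ) (a b : ZMod 2) (x y : Fin n → ZMod 2) :
    kern θ (n+1) ((Fin.cons a x : Fin (n+1) → ZMod 2) + (Fin.cons b y : Fin (n+1) → ZMod 2)) =
     (if a + b = 0 then 1 - θ else θ) * kern θ n (x + y) := by
  unfold kern
  rw [Fin.prod_univ_succ]
  simp

lemma hyper_s8 (p : ℝ) (h0 : 1 < p) (h1 : p ≤ 2) (θ : ℝ) (ht0 : 0 ≤ θ) (ht1 : θ ≤ 1)
    (hr : |1 - 2 * θ| ≤ p - 1) (n : ℕ) :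
    ∀ (f g : (Fin n → ZMod 2) → ℝ) (_ : ∀ x, 0 ≤ f x) (_ : ∀ x, 0 ≤ g x),
    ∑ x, ∑ y, f x * g y * kern θ n (x + y) ≤
      ((2:ℝ) ^ (1 - 2 / p)) ^ n * (∑ x, f x ^ p) ^ (1 / p) * (∑ x, g x ^ p) ^ (1 / p) := by
  induction n with
  | zero =>
    intro f g hf hg
    simp only [Fintype.sum_unique, pow_zero, one_mul]
    have hp : p * p⁻¹ = 1 := by field_simp
    simp [kern, ← Real.rpow_mul (hf _), ← Real.rpow_mul (hg _), hp]
  | succ n ih =>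
    intro f g hf hg
    set F : ZMod 2 → (Fin n → ZMod 2) → ℝ := fun a x => f (Fin.cons a x) with hF
    set G : ZMod 2 → (Fin n → ZMod 2) → ℝ := fun a x => g (Fin.cons a x) with hG
    have hF0 : ∀ a x, 0 ≤ F a x := fun a x => hf _
    have hG0 : ∀ a x, 0 ≤ G a x := fun a x => hg _
    set NF : ZMod 2 → ℝ := fun a => (∑ x, F a x ^ p) ^ (1 / p) with hNF
    set NG : ZMod 2 → ℝ := fun a => (∑ x, G a x ^ p) ^ (1 / p) with hNG
    have sF : ∀ a, 0 ≤ ∑ x, F a x ^ p := fun a => Finset.sum_nonneg fun x _ => Real.rpow_nonneg (hF0 a x) _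
    have sG : ∀ a, 0 ≤ ∑ x, G a x ^ p := fun a => Finset.sum_nonneg fun x _ => Real.rpow_nonneg (hG0 a x) _
    have eF : ∀ a, ∑ x, F a x ^ p = NF a ^ p := fun a => by
      rw [hNF]; simp only; rw [← Real.rpow_mul (sF a), show 1 / p * p = 1 by field_simp, Real.rpow_one]
    have eG : ∀ a, ∑ x, G a x ^ p = NG a ^ p := fun a => by
      rw [hNG]; simp only; rw [← Real.rpow_mul (sG a), show 1 / p * p = 1 by field_simp, Real.rpow_one]
    have I : ∀ a b, ∑ x, ∑ y, F a x * G b y * kern θ n (x + y) ≤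
      ((2:ℝ) ^ (1 - 2 / p)) ^ n * (NF a * NG b) := fun a b => by
      rw [← mul_assoc]; exact ih (F a) (G b) (hF0 a) (hG0 b)
    have L : ∑ x, ∑ y, f x * g y * kern θ (n+1) (x + y) =
      (1 - θ) * (∑ x, ∑ y, F 0 x * G 0 y * kern θ n (x + y) + ∑ x, ∑ y, F 1 x * G 1 y * kern θ n (x + y))
      + θ * (∑ x, ∑ y, F 0 x * G 1 y * kern θ n (x + y) + ∑ x, ∑ y, F 1 x * G 0 y * kern θ n (x + y)) := by
      rw [sum_cons]
      simp only [sum_cons n (fun y => _ * g y * kern θ (n+1) _), kern_cons]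
      have e11 : (1 + 1 : ZMod 2) = 0 := by decide
      simp only [e11, add_zero, zero_add, if_true, one_ne_zero, if_false, Finset.sum_add_distrib,
        mul_add, Finset.mul_sum, hF, hG]
      have c : ∀ a b t k : ℝ, a * b * (t * k) = t * (a * b * k) := fun a b t k => by ring
      simp only [c]
      ring
    rw [L, sum_cons n (fun x => f x ^ p), sum_cons n (fun x => g x ^ p)]
    have T := two_point p h0 h1 θ hr (NF 0) (NF 1) (NG 0) (NG 1) (Real.rpow_nonneg (sF _) _)
      (Real.rpow_nonneg (sF _) _) (Real.rpow_nonneg (sG _) _) (Real.rpow_nonneg (sG _) _)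
    rw [← eF, ← eF, ← eG, ← eG] at T
    have hc : (0:ℝ) ≤ ((2:ℝ) ^ (1 - 2 / p)) ^ n := by positivity
    have ht' : 0 ≤ 1 - θ := by linarith
    calc _ ≤ (1 - θ) * (((2:ℝ) ^ (1 - 2 / p)) ^ n * (NF 0 * NG 0) + ((2:ℝ) ^ (1 - 2 / p)) ^ n * (NF 1 * NG 1))
      + θ * (((2:ℝ) ^ (1 - 2 / p)) ^ n * (NF 0 * NG 1) + ((2:ℝ) ^ (1 - 2 / p)) ^ n * (NF 1 * NG 0)) := by
          gcongr <;> exact I _ _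
      _ = ((2:ℝ) ^ (1 - 2 / p)) ^ n * ((1 - θ) * (NF 0 * NG 0 + NF 1 * NG 1) + θ * (NF 0 * NG 1 + NF 1 * NG 0)) := by ring
      _ ≤ _ := mul_le_mul_of_nonneg_left T hc
      _ = _ := by rw [pow_succ]; ring

/-- tilted noise parameter -/
noncomputable def tilt (α t : ℝ) : ℝ := α * Real.exp t / (1 - α + α * Real.exp t)

lemma tilt_zero (α : ℝ) : tilt α 0 = α := by simp [tilt]

lemma tilt_range (ε α t : ℝ) (he : 0 < ε) (ha : ε ≤ α) (ha2 : α ≤ 1 / 2) (ht : |t| ≤ 1) :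
    ε / 9 ≤ tilt α t ∧ tilt α t ≤ 1 - ε / 9 := by
  have hE : 0 < Real.exp t := Real.exp_pos t
  have h1 : Real.exp t ≤ 3 := by
    have : Real.exp t ≤ Real.exp 1 := Real.exp_le_exp.2 (abs_le.1 ht).2
    linarith [Real.exp_one_lt_three]
  have h2 : 1 ≤ 3 * Real.exp t := by
    have h3 : Real.exp (-t) ≤ Real.exp 1 := Real.exp_le_exp.2 (by linarith [(abs_le.1 ht).1])
    have h4 : Real.exp t * Real.exp (-t) = 1 := by rw [← Real.exp_add]; simp
    nlinarith [Real.exp_one_lt_three]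
  have hZ : 0 < 1 - α + α * Real.exp t := by nlinarith
  have hZ3 : 1 - α + α * Real.exp t ≤ 3 := by nlinarith
  constructor
  · unfold tilt
    rw [le_div_iff₀ hZ]
    nlinarith
  · unfold tilt
    rw [div_le_iff₀ hZ]
    nlinarith

lemma outer (α t η : ℝ) (w r : ℕ) (ha : 0 < α) (ha2 : α ≤ 1 / 2) (ht : |t| ≤ 1) (hη : t ^ 2 = η ^ 2)
    (hw : t * α * (w + r) + η ^ 2 * (w + r) ≤ t * w) :
    α ^ w * (1 - α) ^ r ≤ Real.exp (-((w + r) * (η ^ 2 / 2))) * (tilt α t ^ w * (1 - tilt α t) ^ r) := by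
  have hE : 0 < Real.exp t := Real.exp_pos t
  set Z := 1 - α + α * Real.exp t with hZd
  have hZ : 0 < Z := by nlinarith
  have h1 : 1 - tilt α t = (1 - α) / Z := by
    unfold tilt; rw [← hZd]; field_simp; rw [hZd]; ring
  have h2 : Z ≤ Real.exp (α * (t + η ^ 2)) := by
    have a1 := Real.abs_exp_sub_one_sub_id_le ht
    have a2 := (abs_le.1 a1).2
    have a3 := Real.add_one_le_exp (α * (t + η ^ 2))
    rw [hZd]
    nlinarith
  have h3 : Z ^ (w + r) ≤ Real.exp ((w + r) * (α * (t + η ^ 2))) := by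
    have := pow_le_pow_left₀ hZ.le h2 (w + r)
    rw [← Real.exp_nat_mul] at this
    simpa using this
  have h4 : Z ^ (w + r) ≤ Real.exp (-((w + r) * (η ^ 2 / 2))) * Real.exp (w * t) := by
    refine h3.trans ?_
    rw [← Real.exp_add]
    apply Real.exp_le_exp.2
    have : (0:ℝ) ≤ (w + r) * η ^ 2 := by positivity
    nlinarith
  have h1a : 0 < 1 - α := by linarith
  rw [h1, tilt, ← hZd, div_pow, div_pow, mul_pow, ← Real.exp_nat_mul]
  rw [div_mul_div_comm, mul_div_assoc', le_div_iff₀ (by positivity), ← pow_add]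
  have := mul_le_mul_of_nonneg_left h4 (show 0 ≤ α ^ w * (1 - α) ^ r by positivity)
  linarith

set_option maxHeartbeats 2000000 in
lemma kernel_bound (ε : ℝ) (he : 0 < ε) (he2 : ε ≤ 1 / 2) (i k l : ℕ) (n : ℕ) (hn : 1 ≤ n)
    (hnd : n = 2 * i + (k + l)) (h1 : ε * n ≤ (i + k : ℕ)) (h2 : ε * n ≤ (i + l : ℕ)) :
    ∃ t, (t = 0 ∨ t = ε ^ 2 ∨ t = - ε ^ 2) ∧
     ((2 * i).choose i : ℝ) * ((k + l).choose k : ℝ) ≤ (81 * 36 / ε ^ 4) * (n.choose (i + k) : ℝ) ^ 2 *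
       (tilt (2 * ((i + k : ℕ) / n) * ((i + l : ℕ) / n)) t ^ (2 * i) *
         (1 - tilt (2 * ((i + k : ℕ) / n) * ((i + l : ℕ) / n)) t) ^ (k + l)) := by
  have hn0 : (0:ℝ) < n := by exact_mod_cast hn
  have hnR : (n:ℝ) = 2 * i + (k + l) := by rw [hnd]; push_cast; ring
  set p : ℝ := (i + k : ℕ) / n with hp
  set q : ℝ := (i + l : ℕ) / n with hq
  have hpn : p * n = i + k := by rw [hp]; push_cast; field_simp
  have hqn : q * n = i + l := by rw [hq]; push_cast; field_simp
  have hpq : p + q = 1 := by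
    have : (p + q) * n = 1 * n := by rw [add_mul, hpn, hqn, hnR]; ring
    exact mul_right_cancel₀ hn0.ne' this
  have hpe : ε ≤ p := by rw [hp, le_div_iff₀ hn0]; exact h1
  have hqe : ε ≤ q := by rw [hq, le_div_iff₀ hn0]; exact h2
  have hp0 : 0 < p := by linarith
  have hq0 : 0 < q := by linarith
  set α := 2 * p * q with hα
  have hα1 : 1 - α = p ^ 2 + q ^ 2 := by
    rw [hα]; have : q = 1 - p := by linarith
    rw [this]; ring
  have hα2 : α ≤ 1 / 2 := by nlinarith [sq_nonneg (p - q)]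
  have hαe : ε ≤ α := by
    have : q = 1 - p := by linarith
    rw [hα]
    nlinarith [mul_nonneg (sub_nonneg.2 hpe) (sub_nonneg.2 hqe)]
  have hα0 : 0 < α := by linarith
  have hjpos : 1 ≤ i + k := by
    have : (0:ℝ) < (i + k : ℕ) := lt_of_lt_of_le (by positivity) h1
    exact_mod_cast this
  have hlpos : 1 ≤ i + l := by
    have : (0:ℝ) < (i + l : ℕ) := lt_of_lt_of_le (by positivity) h2
    exact_mod_cast this
  -- lower bound for the sphere size
  have hsum : i + k + (i + l) = n := by omega
  have low := choose_lower (i + k) (i + l) hjpos hlpos p q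
    (by rw [hp, hnR]; push_cast; congr 1; ring) (by rw [hq, hnR]; push_cast; congr 1; ring)
  rw [hsum] at low
  have low2 : 1 ≤ 81 * n * ((n.choose (i + k) : ℝ) ^ 2 * (p ^ (2 * (i + k)) * q ^ (2 * (i + l)))) := by
    have := one_le_pow₀ low (n := 2)
    refine this.trans_eq ?_
    rw [mul_pow, mul_pow, Real.sq_sqrt hn0.le, mul_pow, mul_pow, pow_mul' p, pow_mul' q]
    ring
  set X := ((2 * i).choose i : ℝ) * ((k + l).choose k : ℝ) with hX
  have hX0 : 0 ≤ X := by positivity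
  set c := (n.choose (i + k) : ℝ) with hc
  set P := p ^ (2 * (i + k)) * q ^ (2 * (i + l)) with hP
  have hP0 : 0 < P := by positivity
  have step : X ≤ 81 * n * c ^ 2 * (X * P) := by
    have := mul_le_mul_of_nonneg_left low2 hX0
    linarith
  have XP : X * P = (((2 * i).choose i : ℝ) * (p * q) ^ i * (p * q) ^ i) *
      (((k + l).choose k : ℝ) * (p ^ 2) ^ k * (q ^ 2) ^ l) := by
    rw [hX, hP]; ring
  have gen1 : ((2 * i).choose i : ℝ) * (p * q) ^ i * (p * q) ^ i ≤ α ^ (2 * i) := by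
    have : α = p * q + p * q := by rw [hα]; ring
    rw [this, add_pow]
    have := Finset.single_le_sum (f := fun m => (p * q) ^ m * (p * q) ^ (2 * i - m) * ((2 * i).choose m : ℝ))
      (s := range (2 * i + 1)) (fun m _ => by positivity) (a := i) (by simp; omega)
    refine le_trans (le_of_eq ?_) this
    rw [show 2 * i - i = i by omega]; ac_rfl
  have gen2 : ((k + l).choose k : ℝ) * (p ^ 2) ^ k * (q ^ 2) ^ l ≤ (1 - α) ^ (k + l) := by
    rw [hα1, add_pow]
    have := Finset.single_le_sum (f := fun m => (p ^ 2) ^ m * (q ^ 2) ^ (k + l - m) * ((k + l).choose m : ℝ))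
      (s := range (k + l + 1)) (fun m _ => by positivity) (a := k) (by simp)
    refine le_trans (le_of_eq ?_) this
    rw [show k + l - k = l by omega]; ac_rfl
  have h1a : 0 < 1 - α := by linarith
  have gen : X * P ≤ α ^ (2 * i) * (1 - α) ^ (k + l) := by
    rw [XP]; gcongr
  have e1 : ε ^ 2 ≤ 1 := by nlinarith
  have e0 : 0 < ε ^ 2 := by positivity
  have out : ∀ t : ℝ, |t| ≤ 1 → t ^ 2 = (ε ^ 2) ^ 2 → t * α * n + (ε ^ 2) ^ 2 * n ≤ t * (2 * i : ℕ) →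
      X ≤ (81 * 36 / ε ^ 4) * c ^ 2 * (tilt α t ^ (2 * i) * (1 - tilt α t) ^ (k + l)) := by
    intro t ht hte htw
    have hcast : (((2 * i : ℕ) : ℝ) + ((k + l : ℕ) : ℝ)) = n := by rw [hnR]; push_cast; ring
    have o := outer α t (ε ^ 2) (2 * i) (k + l) hα0 hα2 ht hte (by rw [hcast]; exact htw)
    rw [hcast] at o
    have hT := tilt_range ε α t he hαe hα2 ht
    have hT1 : 0 ≤ tilt α t := by linarith
    have hT2 : 0 ≤ 1 - tilt α t := by linarith
    set K := tilt α t ^ (2 * i) * (1 - tilt α t) ^ (k + l) with hK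
    have hK0 : 0 ≤ K := by positivity
    have hx : (n:ℝ) * Real.exp (-(n * ((ε ^ 2) ^ 2 / 2))) ≤ 2 / ε ^ 4 := by
      set s := (n:ℝ) * ((ε ^ 2) ^ 2 / 2) with hs
      have : s ≤ Real.exp s := by linarith [Real.add_one_le_exp s]
      have : s * Real.exp (-s) ≤ 1 := by
        rw [Real.exp_neg, ← div_eq_mul_inv, div_le_one (Real.exp_pos s)]; exact this
      rw [le_div_iff₀ (by positivity)]
      calc n * Real.exp (-s) * ε ^ 4 = 2 * (s * Real.exp (-s)) := by rw [hs]; ring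
        _ ≤ 2 := by linarith
    calc X ≤ 81 * n * c ^ 2 * (X * P) := step
      _ ≤ 81 * n * c ^ 2 * (Real.exp (-(n * ((ε ^ 2) ^ 2 / 2))) * K) := by
          exact mul_le_mul_of_nonneg_left (gen.trans o) (by positivity)
      _ = 81 * c ^ 2 * K * (n * Real.exp (-(n * ((ε ^ 2) ^ 2 / 2)))) := by ring
      _ ≤ 81 * c ^ 2 * K * (2 / ε ^ 4) := by gcongr
      _ ≤ 81 * c ^ 2 * K * (36 / ε ^ 4) := by gcongr; norm_num
      _ = _ := by ring
  by_cases hA : (α + ε ^ 2) * n ≤ (2 * i : ℕ)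
  · refine ⟨ε ^ 2, by simp, out _ (by rw [abs_of_pos e0]; exact e1) rfl ?_⟩
    nlinarith
  by_cases hB : ((2 * i : ℕ) : ℝ) ≤ (α - ε ^ 2) * n
  · refine ⟨- ε ^ 2, by simp, out _ (by rw [abs_neg, abs_of_pos e0]; exact e1) (by ring) ?_⟩
    nlinarith
  refine ⟨0, by simp, ?_⟩
  rw [tilt_zero]
  push Not at hA hB
  push_cast at hA hB
  set δ := ε ^ 2 / 2 with hδ
  have hδ0 : 0 < δ := by positivity
  have hpq2 : ε ^ 2 ≤ p * q := by nlinarith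
  have bi : δ * n ≤ i := by nlinarith
  have bk : δ * n ≤ k := by
    have : (k:ℝ) = (p ^ 2 + p * q) * n - i := by
      have : p ^ 2 + p * q = p := by rw [pow_two, ← mul_add, hpq, mul_one]
      rw [this]; linarith
    have : ε ^ 2 ≤ p ^ 2 := by gcongr
    nlinarith
  have bl : δ * n ≤ l := by
    have : (l:ℝ) = (q ^ 2 + p * q) * n - i := by
      have : q ^ 2 + p * q = q := by rw [pow_two, ← add_mul, add_comm, hpq, one_mul]
      rw [this]; linarith
    have : ε ^ 2 ≤ q ^ 2 := by gcongr
    nlinarith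
  have dn : 0 < δ * n := by positivity
  have i1 : 1 ≤ i := by have : (0:ℝ) < i := by linarith
                        exact_mod_cast this
  have k1 : 1 ≤ k := by have : (0:ℝ) < k := by linarith
                        exact_mod_cast this
  have l1 : 1 ≤ l := by have : (0:ℝ) < l := by linarith
                        exact_mod_cast this
  have u1 := choose_upper i i i1 i1 (p * q) (p * q) (by positivity) (by positivity)
  have u2 := choose_upper k l k1 l1 (p ^ 2) (q ^ 2) (by positivity) (by positivity)
  rw [← two_mul i, show p * q + p * q = α by rw [hα]; ring] at u1
  rw [← hα1] at u2
  have s1 : √((2 * i : ℕ) : ℝ) ≤ √n := by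
    apply Real.sqrt_le_sqrt; rw [hnR]; push_cast; linarith [Nat.cast_nonneg (α := ℝ) k, Nat.cast_nonneg (α := ℝ) l]
  have s2 : √((k + l : ℕ) : ℝ) ≤ √n := by
    apply Real.sqrt_le_sqrt; rw [hnR]; push_cast; linarith [Nat.cast_nonneg (α := ℝ) i]
  have ri : √(δ * n) ≤ √i := Real.sqrt_le_sqrt bi
  have rk : √(δ * n) ≤ √k := Real.sqrt_le_sqrt bk
  have rl : √(δ * n) ≤ √l := Real.sqrt_le_sqrt bl
  have rr : √(δ * n) * √(δ * n) = δ * n := Real.mul_self_sqrt dn.le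
  have nn : √(n:ℝ) * √n = n := Real.mul_self_sqrt hn0.le
  have v1 : ((2 * i).choose i : ℝ) * (p * q) ^ i * (p * q) ^ i * (δ * n) ≤ 3 * √n * α ^ (2 * i) := by
    refine le_trans ?_ (u1.trans ?_)
    · rw [← rr]; gcongr
    · gcongr
  have v2 : ((k + l).choose k : ℝ) * (p ^ 2) ^ k * (q ^ 2) ^ l * (δ * n) ≤ 3 * √n * (1 - α) ^ (k + l) := by
    refine le_trans ?_ (u2.trans ?_)
    · rw [← rr]; gcongr
    · gcongr
  have v := mul_le_mul v1 v2 (by positivity) (by positivity)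
  have v3 : X * P * (δ * n) ^ 2 ≤ 9 * n * (α ^ (2 * i) * (1 - α) ^ (k + l)) := by
    rw [XP]
    refine le_trans (le_of_eq ?_) (v.trans_eq ?_)
    · ring
    · calc _ = 9 * (√(n:ℝ) * √n) * (α ^ (2 * i) * (1 - α) ^ (k + l)) := by ring
        _ = _ := by rw [nn]
  set K := α ^ (2 * i) * (1 - α) ^ (k + l) with hK
  have v4 : n * (X * P) ≤ 9 / δ ^ 2 * K := by
    rw [div_mul_eq_mul_div, le_div_iff₀ (by positivity)]
    refine le_of_mul_le_mul_right ?_ hn0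
    linarith
  calc X ≤ 81 * n * c ^ 2 * (X * P) := step
    _ = 81 * c ^ 2 * (n * (X * P)) := by ring
    _ ≤ 81 * c ^ 2 * (9 / δ ^ 2 * K) := by gcongr
    _ = _ := by rw [hδ]; field_simp; ring

lemma ham_add (n : ℕ) (z w : Fin n → ZMod 2) :
    hammingNorm (z + w) + 2 * #{i | z i ≠ 0 ∧ w i ≠ 0} = hammingNorm z + hammingNorm w := by
  unfold hammingNorm
  simp only [Finset.card_filter, Finset.mul_sum, ← Finset.sum_add_distrib]
  apply Finset.sum_congr rfl
  intro i _
  have : ∀ a b : ZMod 2, ((if a + b ≠ 0 then 1 else 0) + 2 * (if a ≠ 0 ∧ b ≠ 0 then 1 else 0) : ℕ) =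
    (if a ≠ 0 then 1 else 0) + (if b ≠ 0 then 1 else 0) := by decide
  exact this (z i) (w i)

lemma ham_split (n : ℕ) (z w : Fin n → ZMod 2) :
    hammingNorm z = #{i | z i ≠ 0 ∧ w i ≠ 0} + #{i | z i ≠ 0 ∧ w i = 0} := by
  unfold hammingNorm
  simp only [Finset.card_filter, ← Finset.sum_add_distrib]
  apply Finset.sum_congr rfl
  intro i _
  have : ∀ a b : ZMod 2, ((if a ≠ 0 then 1 else 0) : ℕ) =
    (if a ≠ 0 ∧ b ≠ 0 then 1 else 0) + (if a ≠ 0 ∧ b = 0 then 1 else 0) := by decide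
  exact this (z i) (w i)

lemma count_bound (n j : ℕ) (w : Fin n → ZMod 2)
    (hne : (univ.filter fun z : Fin n → ZMod 2 => hammingNorm z = j ∧ hammingNorm (z + w) = j).Nonempty) :
    ∃ i k l : ℕ, n = 2 * i + (k + l) ∧ j = i + k ∧ hammingNorm w = 2 * i ∧
      #(univ.filter fun z : Fin n → ZMod 2 => hammingNorm z = j ∧ hammingNorm (z + w) = j) ≤
        (2 * i).choose i * (k + l).choose k := by
  have key : ∀ z : Fin n → ZMod 2, hammingNorm z = j ∧ hammingNorm (z + w) = j →
      2 * #{i | z i ≠ 0 ∧ w i ≠ 0} = hammingNorm w ∧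
      #{i | z i ≠ 0 ∧ w i ≠ 0} + #{i | z i ≠ 0 ∧ w i = 0} = j := by
    rintro z ⟨h1, h2⟩
    have a := ham_add n z w
    have b := ham_split n z w
    omega
  have hw : hammingNorm w + #{i | w i = 0} = n := by
    have := Finset.card_filter_add_card_filter_not (s := (univ : Finset (Fin n))) (fun i => w i = 0)
    simp only [Finset.card_univ, Fintype.card_fin] at this
    unfold hammingNorm; simp only [ne_eq]; omega
  obtain ⟨z0, hz0⟩ := hne
  simp only [mem_filter, mem_univ, true_and] at hz0
  obtain ⟨k1, k2⟩ := key z0 hz0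
  set i := #{i | z0 i ≠ 0 ∧ w i ≠ 0}
  set k := #{i | z0 i ≠ 0 ∧ w i = 0} with hk
  have hkle : k ≤ #{i | w i = 0} := by
    apply Finset.card_le_card
    intro a; simp
  refine ⟨i, k, #{i | w i = 0} - k, by omega, k2.symm, k1.symm, ?_⟩
  rw [show k + (#{i | w i = 0} - k) = #{i | w i = 0} by omega]
  rw [k1]
  unfold hammingNorm
  rw [← Finset.card_powersetCard i, ← Finset.card_powersetCard k, ← Finset.card_product]
  apply Finset.card_le_card_of_injOn
    (fun z => (univ.filter fun a => z a ≠ 0 ∧ w a ≠ 0, univ.filter fun a => z a ≠ 0 ∧ w a = 0))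
  · intro z hz
    simp only [coe_filter, mem_univ, true_and, Set.mem_ofPred_eq] at hz
    obtain ⟨m1, m2⟩ := key z hz
    simp only [coe_product, Set.mem_prod, mem_coe, mem_powersetCard]
    refine ⟨⟨?_, by omega⟩, ?_, by omega⟩
    · intro a; simp
    · intro a; simp
  · intro z _ z' _ h
    simp only [Prod.mk.injEq, Finset.ext_iff, mem_filter, mem_univ, true_and] at h
    funext a
    have h1 := h.1 a
    have h2 := h.2 a
    have : ∀ x y b : ZMod 2, (x ≠ 0 ∧ b ≠ 0 ↔ y ≠ 0 ∧ b ≠ 0) → (x ≠ 0 ∧ b = 0 ↔ y ≠ 0 ∧ b = 0) → x = y := by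
      decide
    exact this _ _ _ h1 h2

/-- correlation of the sphere -/
def corr (n j : ℕ) (w : Fin n → ZMod 2) : ℝ := ∑ z, sphereInd n j z * sphereInd n j (z + w)

lemma kern_nonneg (θ : ℝ) (h0 : 0 ≤ θ) (h1 : θ ≤ 1) (n : ℕ) (x : Fin n → ZMod 2) : 0 ≤ kern θ n x := by
  have : 0 ≤ 1 - θ := by linarith
  rw [kern_eq]; positivity

lemma corr_bound (ε : ℝ) (he : 0 < ε) (he2 : ε ≤ 1 / 2) (n j : ℕ) (hn : 1 ≤ n)
    (h1 : ε * n ≤ j) (h2 : (j : ℝ) ≤ (1 - ε) * n) :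
    ∃ a b c : ℝ, (ε / 9 ≤ a ∧ a ≤ 1 - ε / 9) ∧ (ε / 9 ≤ b ∧ b ≤ 1 - ε / 9) ∧
      (ε / 9 ≤ c ∧ c ≤ 1 - ε / 9) ∧ ∀ w, corr n j w ≤ (81 * 36 / ε ^ 4) * (n.choose j : ℝ) ^ 2 *
        (kern a n w + kern b n w + kern c n w) := by
  have hn0 : (0:ℝ) < n := by exact_mod_cast hn
  set α : ℝ := 2 * (j / n) * ((n - j) / n) with hα
  have hp : ε ≤ (j:ℝ) / n := by rw [le_div_iff₀ hn0]; exact h1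
  have hq : ε ≤ ((n:ℝ) - j) / n := by rw [le_div_iff₀ hn0]; linarith
  have hpq : (j:ℝ) / n + ((n:ℝ) - j) / n = 1 := by field_simp; ring
  have hα2 : α ≤ 1 / 2 := by
    rw [hα]; nlinarith [sq_nonneg ((j:ℝ) / n - ((n:ℝ) - j) / n)]
  have hαe : ε ≤ α := by
    rw [hα]
    nlinarith [mul_nonneg (sub_nonneg.2 hp) (sub_nonneg.2 hq)]
  have e1 : ε ^ 2 ≤ 1 := by nlinarith
  have e0 : 0 < ε ^ 2 := by positivity
  have r0 := tilt_range ε α 0 he hαe hα2 (by simp)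
  have r1 := tilt_range ε α (ε ^ 2) he hαe hα2 (by rw [abs_of_pos e0]; exact e1)
  have r2 := tilt_range ε α (-ε ^ 2) he hαe hα2 (by rw [abs_neg, abs_of_pos e0]; exact e1)
  refine ⟨tilt α 0, tilt α (ε ^ 2), tilt α (-ε ^ 2), r0, r1, r2, ?_⟩
  intro w
  have k0 := kern_nonneg (tilt α 0) (by linarith) (by linarith) n w
  have k1 := kern_nonneg (tilt α (ε ^ 2)) (by linarith) (by linarith) n w
  have k2 := kern_nonneg (tilt α (-ε ^ 2)) (by linarith) (by linarith) n w
  have hcorr : corr n j w =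
      (#(univ.filter fun z : Fin n → ZMod 2 => hammingNorm z = j ∧ hammingNorm (z + w) = j) : ℝ) := by
    unfold corr sphereInd
    rw [Finset.card_filter]
    push_cast
    apply Finset.sum_congr rfl
    intro z _
    split_ifs <;> simp_all
  rw [hcorr]
  rcases Finset.eq_empty_or_nonempty
    (univ.filter fun z : Fin n → ZMod 2 => hammingNorm z = j ∧ hammingNorm (z + w) = j) with h | h
  · rw [h]; simp only [card_empty, Nat.cast_zero]; positivity
  obtain ⟨i, k, l, hnd, hj, hw, hb⟩ := count_bound n j w h
  have hnR : (n:ℝ) = 2 * i + (k + l) := by rw [hnd]; push_cast; ring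
  have hl : ((i + l : ℕ):ℝ) = n - j := by rw [hnR, hj]; push_cast; ring
  obtain ⟨t, ht, hk⟩ := kernel_bound ε he he2 i k l n hn hnd (by rw [← hj]; exact h1) (by rw [hl]; linarith)
  rw [hl, ← hj, ← hα] at hk
  have hK : tilt α t ^ (2 * i) * (1 - tilt α t) ^ (k + l) = kern (tilt α t) n w := by
    rw [kern_eq, hw, show n - 2 * i = k + l by omega]
  rw [hK] at hk
  have hb' : (#(univ.filter fun z : Fin n → ZMod 2 => hammingNorm z = j ∧ hammingNorm (z + w) = j) : ℝ) ≤
      ((2 * i).choose i : ℝ) * ((k + l).choose k : ℝ) := by exact_mod_cast hb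
  refine hb'.trans (hk.trans ?_)
  apply mul_le_mul_of_nonneg_left _ (by positivity)
  rcases ht with rfl | rfl | rfl <;> linarith

lemma add_add_self (n : ℕ) (z y : Fin n → ZMod 2) : z + y + y = z := by
  funext a
  have : ∀ b c : ZMod 2, b + c + c = b := by decide
  exact this _ _

lemma energy (n j : ℕ) (f : (Fin n → ZMod 2) → ℝ) :
    (2 ^ n * innerP n (conv n f f) (sphereInd n j)) ^ 2 ≤
      (∑ z, f z ^ 2) * ∑ y, ∑ y', f y * f y' * corr n j (y + y') := by
  set s := sphereInd n j with hs
  have e1 : 2 ^ n * innerP n (conv n f f) s = ∑ z, f z * ∑ y, f y * s (z + y) := by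
    unfold innerP conv
    rw [← mul_assoc, mul_inv_cancel₀ (by positivity), one_mul]
    simp only [Finset.sum_mul, Finset.mul_sum]
    rw [Finset.sum_comm]
    rw [Finset.sum_comm (f := fun z y => f z * (f y * s (z + y)))]
    apply Finset.sum_congr rfl
    intro y _
    rw [← Equiv.sum_comp (Equiv.addRight y)]
    apply Finset.sum_congr rfl
    intro z _
    simp only [Equiv.coe_addRight, add_add_self]
    ring
  have e2 : ∑ y, ∑ y', f y * f y' * corr n j (y + y') = ∑ z, (∑ y, f y * s (z + y)) ^ 2 := by
    have c : ∀ y y', corr n j (y + y') = ∑ z, s (z + y) * s (z + y') := by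
      intro y y'
      unfold corr
      rw [← Equiv.sum_comp (Equiv.addRight y)]
      apply Finset.sum_congr rfl
      intro z _
      simp only [Equiv.coe_addRight]
      rw [← add_assoc, add_add_self]
    simp only [c, pow_two, Finset.sum_mul_sum]
    simp only [Finset.mul_sum]
    rw [Finset.sum_comm (f := fun z y => ∑ y', f y * s (z + y) * (f y' * s (z + y')))]
    apply Finset.sum_congr rfl
    intro y _
    rw [Finset.sum_comm]
    apply Finset.sum_congr rfl
    intro y' _
    apply Finset.sum_congr rfl
    intro z _
    ring
  rw [e1, e2]
  exact Finset.sum_mul_sq_le_sq_mul_sq _ _ _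

theorem sumset_covering_sphere_implies_large :
    ∀ ε : ℝ, 0 < ε → ε ≤ 1 / 2 →
      ∃ C₁ C₂ : ℝ, 0 < C₁ ∧ 0 < C₂ ∧
        ∀ n : ℕ, 1 ≤ n → ∀ lam : ℝ, 0 < lam →
          ∀ A : Finset (Fin n → ZMod 2), A.Nonempty →
            (∃ j : ℕ, ε * n ≤ j ∧ (j : ℝ) ≤ (1 - ε) * n ∧
              lam ≤ 2 ^ n * innerP n (conv n (indSet n A) (indSet n A)) (sphereInd n j) /
                      ((n.choose j : ℝ) * A.card)) →
            C₁ * lam ^ C₂ * 2 ^ n ≤ (A.card : ℝ) := by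
  intro ε he he2
  set p : ℝ := 2 - 2 * ε / 9 with hp
  have hp1 : 1 < p := by rw [hp]; linarith
  have hp2 : p < 2 := by rw [hp]; linarith
  have hp0 : 0 < p := by linarith
  set σ : ℝ := 2 / p - 1 with hσ
  have hσ0 : 0 < σ := by rw [hσ, sub_pos, lt_div_iff₀ hp0]; linarith
  set D : ℝ := (81 * 36 / ε ^ 4) * 3 with hD
  have hD0 : 0 < D := by positivity
  refine ⟨D⁻¹ ^ (1 / σ), 2 / σ, by positivity, by positivity, ?_⟩
  rintro n hn lam hlam A hA ⟨j, h1, h2, hj⟩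
  obtain ⟨a, b, c, ha, hb, hc, hker⟩ := corr_bound ε he he2 n j hn h1 h2
  have hcard : (0:ℝ) < A.card := by exact_mod_cast hA.card_pos
  have hn0 : (0:ℝ) < n := by exact_mod_cast hn
  have hjn : j ≤ n := by
    have : (j:ℝ) ≤ n := by nlinarith
    exact_mod_cast this
  have hch : (0:ℝ) < n.choose j := by exact_mod_cast Nat.choose_pos hjn
  set f := indSet n A with hf
  have hf0 : ∀ x, 0 ≤ f x := by intro x; rw [hf]; unfold indSet; split_ifs <;> norm_num
  have hfsq : ∑ z, f z ^ 2 = A.card := by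
    simp [hf, indSet]
  have hfp : ∑ z, f z ^ p = A.card := by
    have : ∀ z, f z ^ p = if z ∈ A then 1 else 0 := by
      intro z; rw [hf]; unfold indSet; split_ifs
      · simp
      · exact Real.zero_rpow hp0.ne'
    simp [this]
  set T : ℝ := ((2:ℝ) ^ (1 - 2 / p)) ^ n * (A.card : ℝ) ^ (1 / p) * (A.card : ℝ) ^ (1 / p) with hT
  have hyp : ∀ θ, (ε / 9 ≤ θ ∧ θ ≤ 1 - ε / 9) → ∑ x, ∑ y, f x * f y * kern θ n (x + y) ≤ T := by
    intro θ hθ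
    have := hyper_s8 p hp1 hp2.le θ (by linarith) (by linarith)
      (by rw [hp, abs_le]; constructor <;> linarith) n f f hf0 hf0
    rw [hfp] at this
    exact this
  rw [le_div_iff₀ (by positivity)] at hj
  have en := energy n j f
  rw [hfsq] at en
  have hcorr : ∑ y, ∑ y', f y * f y' * corr n j (y + y') ≤ D * (n.choose j : ℝ) ^ 2 * T := by
    calc _ ≤ ∑ y, ∑ y', f y * f y' * ((81 * 36 / ε ^ 4) * (n.choose j : ℝ) ^ 2 *
        (kern a n (y + y') + kern b n (y + y') + kern c n (y + y'))) := by
          apply Finset.sum_le_sum; intro y _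
          apply Finset.sum_le_sum; intro y' _
          exact mul_le_mul_of_nonneg_left (hker _) (mul_nonneg (hf0 _) (hf0 _))
      _ = (81 * 36 / ε ^ 4) * (n.choose j : ℝ) ^ 2 * (∑ x, ∑ y, f x * f y * kern a n (x + y) +
            ∑ x, ∑ y, f x * f y * kern b n (x + y) + ∑ x, ∑ y, f x * f y * kern c n (x + y)) := by
          simp only [← Finset.sum_add_distrib, Finset.mul_sum]
          apply Finset.sum_congr rfl; intro y _
          apply Finset.sum_congr rfl; intro y' _
          ring
      _ ≤ (81 * 36 / ε ^ 4) * (n.choose j : ℝ) ^ 2 * (T + T + T) := by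
          gcongr
          · exact hyp a ha
          · exact hyp b hb
          · exact hyp c hc
      _ = _ := by rw [hD]; ring
  have m1 : (lam * (n.choose j * A.card)) ^ 2 ≤ A.card * (D * (n.choose j : ℝ) ^ 2 * T) := by
    refine le_trans (pow_le_pow_left₀ (by positivity) hj 2) (en.trans ?_)
    gcongr
  have m2 : lam ^ 2 * A.card ≤ D * T := by
    have hq : 0 < (A.card : ℝ) * (n.choose j : ℝ) ^ 2 := by positivity
    refine le_of_mul_le_mul_left ?_ hq
    linarith
  set μ : ℝ := A.card / 2 ^ n with hμ
  have hμ0 : 0 < μ := by positivity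
  have hcμ : (A.card : ℝ) = μ * 2 ^ n := by rw [hμ]; field_simp
  have hTμ : T = A.card * μ ^ σ := by
    have t1 : (A.card : ℝ) ^ (1 / p) * (A.card : ℝ) ^ (1 / p) = A.card * (A.card : ℝ) ^ σ := by
      rw [← Real.rpow_add hcard]
      nth_rewrite 2 [← Real.rpow_one (A.card : ℝ)]
      rw [← Real.rpow_add hcard]; congr 1; rw [hσ]; ring
    have t2 : ((2:ℝ) ^ (1 - 2 / p)) ^ n = (((2:ℝ) ^ n) ^ σ)⁻¹ := by
      rw [← Real.rpow_natCast, ← Real.rpow_natCast, ← Real.rpow_mul (by norm_num),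
        ← Real.rpow_mul (by norm_num), ← Real.rpow_neg (by norm_num)]
      congr 1; rw [hσ]; ring
    rw [hT, mul_assoc, t1, t2, hμ, Real.div_rpow hcard.le (by positivity), div_eq_mul_inv]
    generalize ((2:ℝ) ^ n) ^ σ = Q
    ring
  have m3 : lam ^ 2 * D⁻¹ ≤ μ ^ σ := by
    rw [← div_eq_mul_inv, div_le_iff₀ hD0]
    refine le_of_mul_le_mul_right ?_ hcard
    rw [hTμ] at m2
    linarith
  have m4 := Real.rpow_le_rpow (by positivity) m3 (show 0 ≤ 1 / σ by positivity)
  rw [← Real.rpow_mul hμ0.le, show σ * (1 / σ) = 1 by field_simp, Real.rpow_one,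
    Real.mul_rpow (by positivity) (by positivity), ← Real.rpow_natCast, ← Real.rpow_mul hlam.le] at m4
  rw [hcμ]
  gcongr
  refine le_trans (le_of_eq ?_) m4
  rw [mul_comm]; congr 2; push_cast; ring
end

section
/- For all n ≥ 1, all integers j with 0 ≤ j ≤ n/2, and all integers x with 0 ≤ x ≤ n/2 − √(j(n−j)): the Krawtchouk polynomial satisfies K_j(x) ≥ 0 and K_j(x)/K_j(0) ≤ (1 − 2j/n)^x. -/
open Finset

/-- The Krawtchouk polynomial `K_j` (for the cube `𝔽₂ⁿ`) evaluated at an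
integer argument `x`: `K_j(x) = Σ_{k=0}^{j} (-1)^k C(x,k) C(n-x, j-k)`. -/
def kraw (n j x : ℕ) : ℝ :=
  ∑ k ∈ Finset.range (j + 1),
    (-1 : ℝ) ^ k * (x.choose k : ℝ) * ((n - x).choose (j - k) : ℝ)

open Polynomial in
lemma kraw_coeff_one_sub (x k : ℕ) :
    ((1 - X : ℝ[X]) ^ x).coeff k = (-1) ^ k * (x.choose k : ℝ) := by
  have h : (1 - X : ℝ[X]) ^ x = ((1 + X : ℝ[X]) ^ x).comp (C (-1) * X) := by
    simp [sub_eq_add_neg]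
  rw [h, Polynomial.comp_C_mul_X_coeff, Polynomial.coeff_one_add_X_pow, mul_comm]

open Polynomial in
lemma kraw_eq_coeff (n j x : ℕ) :
    kraw n j x = ((1 - X : ℝ[X]) ^ x * (1 + X) ^ (n - x)).coeff j := by
  rw [Polynomial.coeff_mul, Finset.Nat.sum_antidiagonal_eq_sum_range_succ_mk]
  unfold kraw
  refine Finset.sum_congr rfl fun k _ => ?_
  rw [kraw_coeff_one_sub, Polynomial.coeff_one_add_X_pow]

open Polynomial in
lemma coeff_X_mul_derivative (p : ℝ[X]) (j : ℕ) :
    (X * derivative p).coeff j = j * p.coeff j := by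
  cases j with
  | zero => simp
  | succ j => rw [Polynomial.coeff_X_mul, Polynomial.coeff_derivative]; push_cast; ring

open Polynomial in
lemma kraw_rec (m x j : ℕ) :
    ((m : ℝ) + 1) * kraw (m + x + 2) j (x + 2) =
      ((m : ℝ) + x + 2 - 2 * j) * kraw (m + x + 2) j (x + 1)
        - ((x : ℝ) + 1) * kraw (m + x + 2) j x := by
  have h0 : m + x + 2 - x = m + 2 := by omega
  have h1 : m + x + 2 - (x + 1) = m + 1 := by omega
  have h2 : m + x + 2 - (x + 2) = m := by omega
  rw [kraw_eq_coeff, kraw_eq_coeff, kraw_eq_coeff, h0, h1, h2]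
  have hd := coeff_X_mul_derivative ((1 - X : ℝ[X]) ^ (x + 1) * (1 + X) ^ (m + 1)) j
  have key : C ((m : ℝ) + 1) * ((1 - X : ℝ[X]) ^ (x + 2) * (1 + X) ^ m)
      = C ((m : ℝ) + x + 2) * ((1 - X : ℝ[X]) ^ (x + 1) * (1 + X) ^ (m + 1))
        - C 2 * (X * derivative ((1 - X : ℝ[X]) ^ (x + 1) * (1 + X) ^ (m + 1)))
        - C ((x : ℝ) + 1) * ((1 - X : ℝ[X]) ^ x * (1 + X) ^ (m + 2)) := by
    simp only [derivative_mul, derivative_pow, derivative_sub, derivative_add, derivative_one,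
      derivative_X, Nat.add_sub_cancel, map_add, map_natCast, map_one, map_ofNat, Nat.cast_add,
      Nat.cast_one]
    ring
  have := congrArg (fun p => p.coeff j) key
  simp only [coeff_sub, coeff_C_mul] at this
  rw [hd] at this
  rw [this]; ring

open Polynomial in
lemma kraw_rec_zero (m j : ℕ) :
    ((m : ℝ) + 1) * kraw (m + 1) j 1 = ((m : ℝ) + 1 - 2 * j) * kraw (m + 1) j 0 := by
  rw [kraw_eq_coeff, kraw_eq_coeff]
  simp only [Nat.add_sub_cancel, Nat.sub_zero, pow_zero, one_mul, pow_one]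
  have hd := coeff_X_mul_derivative ((1 + X : ℝ[X]) ^ (m + 1)) j
  have key : C ((m : ℝ) + 1) * ((1 - X : ℝ[X]) * (1 + X) ^ m)
      = C ((m : ℝ) + 1) * (1 + X) ^ (m + 1)
        - C 2 * (X * derivative ((1 + X : ℝ[X]) ^ (m + 1))) := by
    simp only [derivative_pow, derivative_add, derivative_one,
      derivative_X, Nat.add_sub_cancel, map_add, map_natCast, map_one, map_ofNat, Nat.cast_add,
      Nat.cast_one]
    ring
  have := congrArg (fun p => p.coeff j) key
  simp only [coeff_sub, coeff_C_mul] at this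
  rw [hd] at this
  rw [this]; ring

lemma kraw_zero (n j : ℕ) : kraw n j 0 = n.choose j := by
  rw [kraw_eq_coeff]; simp [Polynomial.coeff_one_add_X_pow]

lemma kraw_induction (f : ℕ → ℝ) (n l c : ℝ) (Y : ℕ) (hn : 2 * (Y : ℝ) ≤ n) (hn0 : 0 < n)
    (hc : 0 < c) (hc1 : c ≤ 1) (hl0 : 0 ≤ l) (hl : l ≤ 1) (hcl : c ≤ l)
    (hquad : (n - Y) * c ^ 2 - n * l * c + Y ≤ 0)
    (h0 : 0 < f 0) (h1 : f 1 = l * f 0)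
    (hrec : ∀ x : ℕ, x + 1 ≤ Y → (n - (x + 1)) * f (x + 2) = n * l * f (x + 1) - (x + 1) * f x) :
    ∀ x : ℕ, x ≤ Y → 0 < f x ∧ c * f x ≤ f (x + 1) ∧ f (x + 1) ≤ l * f x := by
  intro x
  induction x with
  | zero =>
    intro _
    refine ⟨h0, ?_, ?_⟩
    · rw [zero_add, h1]; exact mul_le_mul_of_nonneg_right hcl h0.le
    · rw [zero_add, h1]
  | succ x ih =>
    intro hx
    obtain ⟨p, lo, up⟩ := ih (by omega)
    have r := hrec x hx
    have hxY : (x : ℝ) + 1 ≤ Y := by exact_mod_cast hx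
    have hx0 : (0 : ℝ) ≤ x := Nat.cast_nonneg x
    have p1 : 0 < f (x + 1) := lt_of_lt_of_le (mul_pos hc p) lo
    have hd : 0 < n - ((x : ℝ) + 1) := by linarith
    refine ⟨p1, ?_, ?_⟩
    · have q : (n - ((x : ℝ) + 1)) * c ^ 2 - n * l * c + (x + 1) ≤ 0 := by
        nlinarith [mul_nonneg (sub_nonneg.2 hxY) (show 0 ≤ 1 - c ^ 2 by nlinarith)]
      have e1 := mul_le_mul_of_nonneg_right q p1.le
      have e2 := mul_le_mul_of_nonneg_left lo (show (0 : ℝ) ≤ x + 1 by linarith)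
      have : (c * (n - ((x : ℝ) + 1))) * (c * f (x + 1)) ≤ (c * (n - ((x : ℝ) + 1))) * f (x + 1 + 1) := by
        have : (c * (n - ((x : ℝ) + 1))) * f (x + 1 + 1)
            = c * (n * l * f (x + 1) - (x + 1) * f x) := by rw [← r]; ring
        rw [this]; nlinarith
      exact le_of_mul_le_mul_left this (mul_pos hc hd)
    · have a1 : f (x + 1) ≤ f x := by nlinarith
      have a2 : l * f (x + 1) ≤ f x := by nlinarith
      have e2 := mul_le_mul_of_nonneg_left a2 (show (0 : ℝ) ≤ x + 1 by linarith)
      have : (n - ((x : ℝ) + 1)) * f (x + 1 + 1) ≤ (n - ((x : ℝ) + 1)) * (l * f (x + 1)) := by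
        show (n - ((x : ℝ) + 1)) * f (x + 2) ≤ _
        rw [r]; nlinarith
      exact le_of_mul_le_mul_left this hd

theorem krawtchouk_ratio_bound_before_first_root :
    ∀ n : ℕ, 1 ≤ n → ∀ j x : ℕ,
      (j : ℝ) ≤ (n : ℝ) / 2 →
      (x : ℝ) ≤ (n : ℝ) / 2 - Real.sqrt ((j : ℝ) * ((n : ℝ) - (j : ℝ))) →
      0 ≤ kraw n j x ∧ kraw n j x / kraw n j 0 ≤ (1 - 2 * (j : ℝ) / n) ^ x := by
  intro n hn j Y hj hY
  have hn0 : (0 : ℝ) < n := by exact_mod_cast hn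
  have hj0 : (0 : ℝ) ≤ j := Nat.cast_nonneg j
  have hY0 : (0 : ℝ) ≤ Y := Nat.cast_nonneg Y
  have hs0 := Real.sqrt_nonneg ((j : ℝ) * ((n : ℝ) - (j : ℝ)))
  have hsq : Real.sqrt ((j : ℝ) * ((n : ℝ) - (j : ℝ))) ^ 2 = (j : ℝ) * ((n : ℝ) - (j : ℝ)) :=
    Real.sq_sqrt (mul_nonneg hj0 (by linarith))
  set s := Real.sqrt ((j : ℝ) * ((n : ℝ) - (j : ℝ)))
  have hjn : j ≤ n := by
    have : (j : ℝ) ≤ n := by linarith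
    exact_mod_cast this
  have hK0 : 0 < kraw n j 0 := by
    rw [kraw_zero]; exact_mod_cast Nat.choose_pos hjn
  have hdisc : 4 * (Y : ℝ) * (n - Y) ≤ (n - 2 * j) ^ 2 := by
    have : s ^ 2 ≤ ((n : ℝ) / 2 - Y) ^ 2 := pow_le_pow_left₀ hs0 (by linarith) 2
    nlinarith
  rcases Nat.eq_zero_or_pos Y with rfl | hYpos
  · exact ⟨hK0.le, by rw [pow_zero, div_self hK0.ne']⟩
  have hY1 : (1 : ℝ) ≤ Y := by exact_mod_cast hYpos
  have hj' : 0 < (n : ℝ) - 2 * j := by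
    rcases lt_or_eq_of_le (show 0 ≤ (n : ℝ) - 2 * j by linarith) with h | h
    · exact h
    · rw [← h] at hdisc; nlinarith
  have h2Y : 2 * (Y : ℝ) ≤ n := by linarith
  have h2Yn : 2 * Y ≤ n := by exact_mod_cast h2Y
  have hnY : 0 < (n : ℝ) - Y := by linarith
  have hnl : (n : ℝ) * (1 - 2 * (j : ℝ) / n) = n - 2 * j := by field_simp
  have hl0 : 0 ≤ 1 - 2 * (j : ℝ) / n := by
    rw [sub_nonneg, div_le_one hn0]; linarith
  have hl1 : 1 - 2 * (j : ℝ) / n ≤ 1 := by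
    have : 0 ≤ 2 * (j : ℝ) / n := by positivity
    linarith
  set l := 1 - 2 * (j : ℝ) / n with hl
  have H := kraw_induction (kraw n j) n l ((n - 2 * j) / (2 * (n - Y))) Y h2Y hn0
    (by positivity) (by rw [div_le_one (by positivity)]; linarith) hl0 hl1
    (by rw [div_le_iff₀ (by positivity)]; nlinarith)
    (by
      rw [hnl]
      have : ((n : ℝ) - Y) * ((n - 2 * j) / (2 * (n - Y))) ^ 2
          - (n - 2 * j) * ((n - 2 * j) / (2 * (n - Y))) + Y
          = (4 * (Y : ℝ) * (n - Y) - (n - 2 * j) ^ 2) / (4 * (n - Y)) := by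
        field_simp; ring
      rw [this]
      exact div_nonpos_of_nonpos_of_nonneg (by linarith) (by positivity))
    hK0
    (by
      obtain ⟨m, rfl⟩ : ∃ m, n = m + 1 := ⟨n - 1, by omega⟩
      have := kraw_rec_zero m j
      have h3 : ((m + 1 : ℕ) : ℝ) * kraw (m + 1) j 1
          = ((m + 1 : ℕ) : ℝ) * (l * kraw (m + 1) j 0) := by
        rw [← mul_assoc, hnl]; push_cast; exact this
      exact mul_left_cancel₀ hn0.ne' h3)
    (by
      intro x hx
      rw [hnl]
      obtain ⟨m, hm⟩ : ∃ m, n = m + x + 2 := ⟨n - x - 2, by omega⟩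
      have := kraw_rec m x j
      rw [← hm] at this
      have hm' : (n : ℝ) = m + x + 2 := by rw [hm]; push_cast; ring
      rw [hm']
      linear_combination this)
  have hpow : ∀ x : ℕ, x ≤ Y → kraw n j x ≤ l ^ x * kraw n j 0 := by
    intro x
    induction x with
    | zero => intro _; simp
    | succ x ih =>
      intro hx
      have h1 := ih (by omega)
      have h2 := (H x (by omega)).2.2
      calc kraw n j (x + 1) ≤ l * kraw n j x := h2
        _ ≤ l * (l ^ x * kraw n j 0) := mul_le_mul_of_nonneg_left h1 hl0
        _ = l ^ (x + 1) * kraw n j 0 := by ring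
  exact ⟨(H Y le_rfl).1.le, by rw [div_le_iff₀ hK0]; exact hpow Y le_rfl⟩
end

section
/- Let α, δ₀, C > 0 and let f : [0, δ₀] → ℝ be continuous with f(0) = 0, differentiable with derivative (one-sided at 0) bounded in absolute value by C, and satisfying f(δ) − α·h(δ) < 0 for all δ ∈ (0, δ₀]. Then sup over n ≥ 1 of the maximum over δ ∈ [0, δ₀] of e^{n(f(δ) − α h(δ))}·√(nδ) is finite. -/
/-- The natural-log binary entropy function `h(t) = -t ln t - (1-t) ln(1-t)`
(with `h(0) = 0`, using the convention `ln 0 = 0`). -/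
noncomputable def binEnt (t : ℝ) : ℝ := -t * Real.log t - (1 - t) * Real.log (1 - t)

theorem binEnt_continuous : Continuous binEnt := by
  have h1 : Continuous fun t : ℝ => t * Real.log t := Real.continuous_mul_log
  have h2 : Continuous fun t : ℝ => (1 - t) * Real.log (1 - t) :=
    h1.comp (continuous_const.sub continuous_id)
  have h3 : binEnt = fun t => -(t * Real.log t) - (1 - t) * Real.log (1 - t) := by
    funext t; unfold binEnt; ring
  rw [h3]
  exact h1.neg.sub h2

theorem exp_entropy_gap_sqrt_bounded :
    ∀ α δ₀ C : ℝ, 0 < α → 0 < δ₀ → 0 < C →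
      ∀ f f' : ℝ → ℝ,
        ContinuousOn f (Set.Icc 0 δ₀) → f 0 = 0 →
        (∀ δ ∈ Set.Icc (0 : ℝ) δ₀,
          HasDerivWithinAt f (f' δ) (Set.Icc 0 δ₀) δ ∧ |f' δ| ≤ C) →
        (∀ δ ∈ Set.Ioc (0 : ℝ) δ₀, f δ - α * binEnt δ < 0) →
        ∃ M : ℝ, ∀ n : ℕ, 1 ≤ n → ∀ δ ∈ Set.Icc (0 : ℝ) δ₀,
          Real.exp (n * (f δ - α * binEnt δ)) * Real.sqrt (n * δ) ≤ M := by
  intro α δ₀ C hα hδ hC f f' hf hf0 hd hneg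
  have hlip : ∀ δ ∈ Set.Icc (0 : ℝ) δ₀, f δ ≤ C * δ := by
    intro δ hm
    have := Convex.norm_image_sub_le_of_norm_hasDerivWithin_le (f := f) (f' := f') (C := C)
      (s := Set.Icc 0 δ₀) (x := 0) (y := δ) (fun x hx => (hd x hx).1)
      (fun x hx => (hd x hx).2) (convex_Icc 0 δ₀) ⟨le_refl _, hδ.le⟩ hm
    rw [hf0, sub_zero, sub_zero, Real.norm_eq_abs, Real.norm_eq_abs, abs_of_nonneg hm.1] at this
    exact (le_abs_self _).trans this
  obtain ⟨c, hc, hcb⟩ : ∃ c > 0, ∀ δ ∈ Set.Icc (0 : ℝ) δ₀, f δ - α * binEnt δ ≤ -(c * δ) := by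
    set ε := min (Real.exp (-((C + 1) / α))) δ₀ with hε
    have hε0 : 0 < ε := lt_min (Real.exp_pos _) hδ
    have hεδ : ε ≤ δ₀ := min_le_right _ _
    have hcont : ContinuousOn (fun δ => f δ - α * binEnt δ) (Set.Icc ε δ₀) :=
      (hf.mono (Set.Icc_subset_Icc_left hε0.le)).sub
        (continuous_const.mul binEnt_continuous).continuousOn
    obtain ⟨x, hx, hmax⟩ := isCompact_Icc.exists_isMaxOn ⟨ε, le_refl _, hεδ⟩ hcont
    have hxneg := hneg x ⟨hε0.trans_le hx.1, hx.2⟩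
    set m := -(f x - α * binEnt x) with hm
    have hm0 : 0 < m := by linarith
    refine ⟨min 1 (m / δ₀), lt_min one_pos (div_pos hm0 hδ), ?_⟩
    intro δ hδm
    rcases le_or_gt ε δ with h | h
    · have h1 : f δ - α * binEnt δ ≤ -m := by
        have : f δ - α * binEnt δ ≤ f x - α * binEnt x := hmax ⟨h, hδm.2⟩
        linarith
      have h2 : min 1 (m / δ₀) * δ ≤ m / δ₀ * δ₀ :=
        mul_le_mul (min_le_right _ _) hδm.2 hδm.1 (div_pos hm0 hδ).le
      rw [div_mul_cancel₀ _ hδ.ne'] at h2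
      linarith
    · have h2 : min 1 (m / δ₀) * δ ≤ 1 * δ :=
        mul_le_mul_of_nonneg_right (min_le_left _ _) hδm.1
      rcases hδm.1.eq_or_lt with h0 | h0
      · subst h0
        simp [binEnt, hf0]
      have h3 : δ < Real.exp (-((C + 1) / α)) := h.trans_le (min_le_left _ _)
      have h4 : Real.log δ < -((C + 1) / α) := (Real.log_lt_iff_lt_exp h0).2 h3
      have h5 : δ < 1 := h3.trans_le (Real.exp_le_one_iff.2 (by
        have : 0 < (C + 1) / α := by positivity
        linarith))
      have h6 : (1 - δ) * Real.log (1 - δ) ≤ 0 :=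
        mul_nonpos_of_nonneg_of_nonpos (by linarith)
          (Real.log_nonpos (by linarith) (by linarith))
      have h7 : α * Real.log δ ≤ -(C + 1) := by
        have := mul_le_mul_of_nonneg_left h4.le hα.le
        rwa [mul_neg, mul_div_cancel₀ _ hα.ne'] at this
      have h8 := mul_le_mul_of_nonneg_left h7 h0.le
      have h9 := mul_nonpos_of_nonneg_of_nonpos hα.le h6
      have h10 := hlip δ hδm
      unfold binEnt
      nlinarith
  refine ⟨1 + 1 / c, ?_⟩
  intro n _ δ hm
  set x : ℝ := n * δ with hx
  have hx0 : 0 ≤ x := mul_nonneg n.cast_nonneg hm.1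
  have h1 : (n : ℝ) * (f δ - α * binEnt δ) ≤ -(c * x) := by
    have := mul_le_mul_of_nonneg_left (hcb δ hm) (n.cast_nonneg (α := ℝ))
    rw [hx]; linarith
  have h2 : Real.sqrt x ≤ 1 + x := by
    rw [Real.sqrt_le_left (by linarith)]; nlinarith
  have h3 : c * x + 1 ≤ Real.exp (c * x) := Real.add_one_le_exp _
  have h4 : 1 + x ≤ (1 + 1 / c) * (c * x + 1) := by
    have : (1 + 1 / c) * (c * x + 1) = 1 + x + (c * x + 1 / c) := by field_simp; ring
    rw [this]
    have : 0 ≤ c * x + 1 / c := by positivity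
    linarith
  have h5 : (1 + 1 / c) * (c * x + 1) ≤ (1 + 1 / c) * Real.exp (c * x) :=
    mul_le_mul_of_nonneg_left h3 (by positivity)
  calc _ ≤ Real.exp (-(c * x)) * ((1 + 1 / c) * Real.exp (c * x)) :=
        mul_le_mul (Real.exp_le_exp.2 h1) (by linarith) (Real.sqrt_nonneg _) (Real.exp_pos _).le
    _ = 1 + 1 / c := by
        rw [mul_left_comm, ← Real.exp_add]; simp
end

section
/- For all n ≥ 1, all integers j with 0 ≤ j ≤ n/2, and all integers x with n·ξ_crit(j/n) ≤ x ≤ n·(1 − ξ_crit(j/n)), where ξ_crit(δ) = 1/2 − √(δ(1−δ)), the Krawtchouk polynomial satisfies |K_j(x)| ≤ exp{ (n/2) · ( h(j/n) + ln 2 − h(x/n) ) }. -/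
open Finset

/-- The generating polynomial of the Krawtchouk values. -/
noncomputable def krawPoly (n x : ℕ) : Polynomial ℂ :=
  (1 - Polynomial.X) ^ x * (1 + Polynomial.X) ^ (n - x)

lemma coeff_one_sub_X_pow_aux (x k : ℕ) :
    ((1 - Polynomial.X : Polynomial ℂ) ^ x).coeff k = (-1) ^ k * (x.choose k : ℂ) := by
  have h : (1 - Polynomial.X : Polynomial ℂ) ^ x
      = ((1 + Polynomial.X) ^ x : Polynomial ℂ).comp (Polynomial.C (-1) * Polynomial.X) := by
    simp [sub_eq_add_neg]
  rw [h, Polynomial.comp_C_mul_X_coeff, Polynomial.coeff_one_add_X_pow, mul_comm]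

lemma krawPoly_coeff (n j x : ℕ) : (krawPoly n x).coeff j = ((kraw n j x : ℝ) : ℂ) := by
  unfold krawPoly kraw
  rw [Polynomial.coeff_mul, Finset.Nat.sum_antidiagonal_eq_sum_range_succ_mk]
  push_cast
  refine Finset.sum_congr rfl fun k _ => ?_
  simp only [coeff_one_sub_X_pow_aux, Polynomial.coeff_one_add_X_pow]

lemma iteratedDeriv_poly_aux (p : Polynomial ℂ) (j : ℕ) :
    iteratedDeriv j (fun z => p.eval z)
      = fun z => (Polynomial.derivative^[j] p).eval z := by
  induction j with
  | zero => simp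
  | succ j ih =>
    rw [iteratedDeriv_succ, ih, Function.iterate_succ_apply']
    funext z
    rw [Polynomial.deriv]

/-- Cauchy's estimate for coefficients of a polynomial. -/
lemma coeff_bound_aux (p : Polynomial ℂ) (j : ℕ) {r C : ℝ} (hr : 0 < r)
    (hC : ∀ z : ℂ, ‖z‖ = r → ‖p.eval z‖ ≤ C) : ‖p.coeff j‖ ≤ C / r ^ j := by
  have h := Complex.norm_iteratedDeriv_le_of_forall_mem_sphere_norm_le (c := 0) (R := r) (C := C)
    (f := fun z => p.eval z) j hr (Differentiable.diffContOnCl p.differentiable)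
    (fun z hz => hC z (by simpa using hz))
  rw [iteratedDeriv_poly_aux] at h
  simp only [← Polynomial.coeff_zero_eq_eval_zero, Polynomial.coeff_iterate_derivative, zero_add,
    Nat.descFactorial_self, nsmul_eq_mul, norm_mul, Complex.norm_natCast] at h
  have hf : (0 : ℝ) < (j.factorial : ℝ) := by exact_mod_cast j.factorial_pos
  rw [mul_div_assoc] at h
  exact le_of_mul_le_mul_left h hf

lemma pow_le_exp_aux (n x : ℕ) (hn : 1 ≤ n) (a : ℝ) (ha : 0 ≤ a) :
    a ^ x ≤ Real.exp (n * ((x / n : ℝ) * Real.log (x / n : ℝ) + a - x / n)) := by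
  have hn' : (0 : ℝ) < n := by exact_mod_cast hn
  rcases Nat.eq_zero_or_pos x with rfl | hx
  · simp only [pow_zero, Nat.cast_zero, zero_div, zero_mul, zero_add, sub_zero]
    exact Real.one_le_exp (by positivity)
  rcases ha.eq_or_lt with rfl | ha
  · rw [zero_pow hx.ne']; positivity
  have hx' : (0 : ℝ) < x := by exact_mod_cast hx
  have ht : (0 : ℝ) < x / n := by positivity
  generalize hteq : (x / n : ℝ) = t at *
  have hxt : (x : ℝ) = n * t := by rw [← hteq]; field_simp
  have e : a ^ x = Real.exp (x * Real.log a) := by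
    rw [Real.exp_nat_mul, Real.exp_log ha]
  rw [e, Real.exp_le_exp, hxt, mul_assoc]
  refine mul_le_mul_of_nonneg_left ?_ hn'.le
  have h := Real.log_le_sub_one_of_pos (div_pos ha ht)
  rw [Real.log_div ha.ne' ht.ne'] at h
  have h2 := mul_le_mul_of_nonneg_left h ht.le
  have h3 : t * (a / t - 1) = a - t := by field_simp
  linarith

lemma gibbs_aux (n x : ℕ) (hn : 1 ≤ n) (hx : x ≤ n) (a b : ℝ) (ha : 0 ≤ a) (hb : 0 ≤ b)
    (hab : a + b = 1) :
    a ^ x * b ^ (n - x) ≤ Real.exp (-(n * binEnt (x / n))) := by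
  have h1 := pow_le_exp_aux n x hn a ha
  have h2 := pow_le_exp_aux n (n - x) hn b hb
  have hn' : (0 : ℝ) < n := by exact_mod_cast hn
  have e : (((n - x : ℕ) : ℝ) / n) = 1 - x / n := by
    rw [Nat.cast_sub hx]; field_simp
  rw [e] at h2
  refine (mul_le_mul h1 h2 (by positivity) (by positivity)).trans ?_
  rw [← Real.exp_add, Real.exp_le_exp]
  unfold binEnt
  obtain rfl : b = 1 - a := by linarith
  apply le_of_eq
  ring

lemma krawPoly_norm_aux (n x : ℕ) (hn : 1 ≤ n) (hx : x ≤ n) (r : ℝ) (z : ℂ) (hz : ‖z‖ = r) :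
    ‖(krawPoly n x).eval z‖ ≤
      Real.exp ((n : ℝ) / 2 * (Real.log (1 + r ^ 2) + Real.log 2 - binEnt (x / n))) := by
  have hs : (0 : ℝ) < 2 * (1 + r ^ 2) := by positivity
  have hpar : ‖1 - z‖ ^ 2 + ‖1 + z‖ ^ 2 = 2 * (1 + r ^ 2) := by
    have := parallelogram_law_with_norm ℝ (1 : ℂ) z
    rw [hz] at this
    simp only [norm_one] at this
    nlinarith
  have hg := gibbs_aux n x hn hx (‖1 - z‖ ^ 2 / (2 * (1 + r ^ 2)))
    (‖1 + z‖ ^ 2 / (2 * (1 + r ^ 2))) (by positivity) (by positivity)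
    (by rw [← add_div, hpar, div_self hs.ne'])
  refine abs_le_of_sq_le_sq' ?_ (by positivity) |>.2
  rw [div_pow, div_pow, div_mul_div_comm, ← pow_add, Nat.add_sub_cancel' hx,
    div_le_iff₀ (by positivity)] at hg
  have e1 : ‖(krawPoly n x).eval z‖ ^ 2 = (‖1 - z‖ ^ 2) ^ x * (‖1 + z‖ ^ 2) ^ (n - x) := by
    simp only [krawPoly, Polynomial.eval_mul, Polynomial.eval_pow, Polynomial.eval_sub,
      Polynomial.eval_add, Polynomial.eval_one, Polynomial.eval_X, norm_mul, norm_pow]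
    ring
  rw [e1]
  refine hg.trans (le_of_eq ?_)
  have e2 : (2 * (1 + r ^ 2)) ^ n = Real.exp (n * (Real.log 2 + Real.log (1 + r ^ 2))) := by
    rw [← Real.log_mul two_ne_zero (by positivity), Real.exp_nat_mul, Real.exp_log hs]
  rw [e2, ← Real.exp_add, ← Real.exp_nat_mul]
  congr 1
  push_cast
  ring

theorem krawtchouk_bound_in_critical_strip :
    ∀ n : ℕ, 1 ≤ n → ∀ j : ℕ, (j : ℝ) ≤ (n : ℝ) / 2 → ∀ x : ℕ, x ≤ n →
      (n : ℝ) * (1 / 2 - Real.sqrt (((j : ℝ) / n) * (1 - (j : ℝ) / n))) ≤ (x : ℝ) →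
      (x : ℝ) ≤ (n : ℝ) * (1 - (1 / 2 - Real.sqrt (((j : ℝ) / n) * (1 - (j : ℝ) / n)))) →
      |kraw n j x| ≤
        Real.exp ((n : ℝ) / 2 * (binEnt ((j : ℝ) / n) + Real.log 2 - binEnt ((x : ℝ) / n))) := by
  intro n hn j hj x hx _ _
  have hn' : (0 : ℝ) < n := by exact_mod_cast hn
  rcases Nat.eq_zero_or_pos j with rfl | hjpos
  · have h1 : kraw n 0 x = 1 := by simp [kraw]
    rw [h1, abs_one]
    apply Real.one_le_exp
    have h2 : binEnt ((x : ℝ) / n) ≤ Real.log 2 := by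
      have h := Real.binEntropy_le_log_two (p := (x : ℝ) / n)
      rw [Real.binEntropy_eq_negMulLog_add_negMulLog_one_sub] at h
      simp only [Real.negMulLog] at h
      unfold binEnt
      linarith
    have h3 : binEnt (((0 : ℕ) : ℝ) / n) = 0 := by simp [binEnt]
    rw [h3]
    have : 0 ≤ 0 + Real.log 2 - binEnt ((x : ℝ) / n) := by linarith
    positivity
  have hj' : (0 : ℝ) < j := by exact_mod_cast hjpos
  have hd0 : (0 : ℝ) < j / n := by positivity
  have hd1 : (0 : ℝ) < 1 - j / n := by
    rw [sub_pos, div_lt_one hn']; linarith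
  generalize hd : (j / n : ℝ) = d at *
  have hjd : (j : ℝ) = n * d := by rw [← hd]; field_simp
  have hr : 0 < Real.sqrt (d / (1 - d)) := Real.sqrt_pos.2 (div_pos hd0 hd1)
  have h := coeff_bound_aux (krawPoly n x) j hr
    (fun z hz => krawPoly_norm_aux n x hn hx _ z hz)
  rw [krawPoly_coeff, Complex.norm_real, Real.norm_eq_abs] at h
  refine h.trans (le_of_eq ?_)
  have e1 : Real.sqrt (d / (1 - d)) ^ j
      = Real.exp (j * ((Real.log d - Real.log (1 - d)) / 2)) := by
    rw [← Real.log_div hd0.ne' hd1.ne', ← Real.log_sqrt (div_pos hd0 hd1).le,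
      Real.exp_nat_mul, Real.exp_log hr]
  have e2 : Real.log (1 + Real.sqrt (d / (1 - d)) ^ 2) = -Real.log (1 - d) := by
    rw [Real.sq_sqrt (div_pos hd0 hd1).le, ← Real.log_inv]
    congr 1
    field_simp
    ring
  rw [e1, e2, ← Real.exp_sub, hjd]
  congr 1
  unfold binEnt
  ring
end
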